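/- arXiv:2511.16149 — 3 statements merged into one kernel-verified Lean document; each statement's English description precedes it below -/
import Mathlib

section
/- Let K ∈ ℕ₀, N ∈ ℕ with N ≥ 1, r := ⌈(K+3)/2⌉, and let f : ℝ → ℝ be continuous, 2π-periodic, with absolutely summable Fourier coefficients. Define J_{N,K} as the normalized Jackson kernel (1/λ)(sin((⌊N/2⌋+1)t/2)/sin(t/2))^{2r} and (T_{N,K} f)(x) := ∫_{-π}^{π} J_{N,K}(t) ∑_{k=1}^{K+1} (-1)^{k+1} binom(K+1,k) f(x+kt) dt. Then T_{N,K} f is a real trigonometric polynomial of degree at most r⌊N/2⌋; more precisely, (T_{N,K} f)(x) = (2π/λ) ∑_{n=-r⌊N/2⌋}^{r⌊N/2⌋} m_{n,K} f̂(n) e^{i n x}, where m_{n,K} := ∑_{k: 1 ≤ k ≤ K+1, k|n| ≤ r⌊N/2⌋} (-1)^{k+1} binom(K+1,k) m̃_{k|n|}, with m̃_l := |{m ∈ {−⌊N/2⌋/2, ..., ⌊N/2⌋/2}^{2r} : ∑_j m_j = l}|. -/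
open Complex Real intervalIntegral

/-- number of tuples summing to `l + rM` -/
def jkMt (r M : ℕ) (l : ℤ) : ℕ :=
  (Finset.univ.filter fun v : Fin (2 * r) → Fin (M + 1) =>
        (∑ j, ((v j : ℤ))) = l + r * M).card

/-- the kernel as trigonometric polynomial -/
noncomputable def jkG (r M : ℕ) (t : ℝ) : ℂ :=
  ∑ v : Fin (2 * r) → Fin (M + 1), Complex.exp (Complex.I * (((∑ j, (v j : ℤ)) - r * M : ℤ) : ℂ) * (t : ℂ))

lemma jkMt_neg (r M : ℕ) (l : ℤ) : jkMt r M (-l) = jkMt r M l := by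
  unfold jkMt
  refine Finset.card_bij' (fun v _ => fun j => Fin.rev (v j)) (fun v _ => fun j => Fin.rev (v j)) ?_ ?_ ?_ ?_
  · intro v hv
    simp only [Finset.mem_filter, Finset.mem_univ, true_and] at hv ⊢
    have : ∀ j, ((Fin.rev (v j) : Fin (M+1)) : ℤ) = (M : ℤ) - (v j : ℤ) := by
      intro j
      have := (v j).is_lt
      rw [Fin.val_rev]; omega
    simp only [this, Finset.sum_sub_distrib, hv]
    simp; ring
  · intro v hv
    simp only [Finset.mem_filter, Finset.mem_univ, true_and] at hv ⊢
    have : ∀ j, ((Fin.rev (v j) : Fin (M+1)) : ℤ) = (M : ℤ) - (v j : ℤ) := by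
      intro j
      have := (v j).is_lt
      rw [Fin.val_rev]; omega
    simp only [this, Finset.sum_sub_distrib, hv]
    simp; ring
  · intro v hv; simp
  · intro v hv; simp

lemma jkMt_zero (r M : ℕ) (l : ℤ) (h : (r * M : ℤ) < l) : jkMt r M l = 0 := by
  unfold jkMt
  rw [Finset.card_eq_zero, Finset.filter_eq_empty_iff]
  intro v _ hv
  have : ∑ j, ((v j : ℤ)) ≤ ∑ j : Fin (2 * r), (M : ℤ) := by
    apply Finset.sum_le_sum
    intro j _
    have := (v j).is_lt
    omega
  simp at this
  nlinarith

lemma jkMt_abs (r M k : ℕ) (n : ℤ) : jkMt r M ((k : ℤ) * |n|) = jkMt r M (-((k : ℤ) * n)) := by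
  rcases abs_choice n with h | h <;> rw [h]
  · rw [jkMt_neg]
  · rw [mul_neg]

lemma jk_int (l : ℤ) : ∫ t in (-π)..π, Complex.exp (Complex.I * (l : ℂ) * (t : ℂ)) =
    if l = 0 then 2 * (π : ℂ) else 0 := by
  split_ifs with h
  · subst h; simp; ring
  · have hl : Complex.I * (l : ℂ) ≠ 0 := by simp [h]
    rw [integral_exp_mul_complex hl]
    have : Complex.exp (Complex.I * l * (π : ℝ)) = Complex.exp (Complex.I * l * ((-π : ℝ) : ℂ)) := by
      rw [Complex.exp_eq_exp_iff_exists_int]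
      exact ⟨l, by push_cast; ring⟩
    rw [this]; simp

lemma jk_dir (M : ℕ) (t : ℝ) (hs : Real.sin (t / 2) ≠ 0) :
    (∑ a : Fin (M + 1), Complex.exp (Complex.I * (a : ℕ) * t)) * Complex.exp (-(Complex.I * M * t / 2))
      = ((Real.sin (((M : ℝ) + 1) * t / 2) / Real.sin (t / 2) : ℝ) : ℂ) := by
  have hs' : Complex.sin ((t : ℂ) / 2) ≠ 0 := by
    have : ((Real.sin (t / 2) : ℝ) : ℂ) ≠ 0 := by exact_mod_cast hs
    simpa using this
  push_cast
  rw [eq_div_iff hs']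
  rw [Fin.sum_univ_eq_sum_range (fun a => Complex.exp (Complex.I * (a : ℕ) * t)) (M + 1)]
  have e1 : ∀ a : ℕ, Complex.exp (Complex.I * (a : ℕ) * t) = (Complex.exp (Complex.I * t)) ^ a := by
    intro a; rw [← Complex.exp_nat_mul]; congr 1; ring
  simp only [e1]
  have hg := geom_sum_mul (Complex.exp (Complex.I * t)) (M + 1)
  set D := ∑ i ∈ Finset.range (M + 1), (Complex.exp (Complex.I * t)) ^ i with hD
  rw [← e1] at hg
  have h1 : Complex.sin ((t : ℂ) / 2) = (Complex.exp (Complex.I * t) - 1) * Complex.exp (-(Complex.I * t / 2)) * (-Complex.I / 2) := by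
    rw [Complex.sin, sub_mul (Complex.exp (Complex.I * t)), ← Complex.exp_add, one_mul]
    rw [show Complex.I * t + -(Complex.I * t / 2) = (t : ℂ) / 2 * Complex.I by ring,
      show -(Complex.I * t / 2) = -((t : ℂ) / 2) * Complex.I by ring]
    ring
  have h2 : Complex.sin (((M : ℂ) + 1) * t / 2) = (Complex.exp (Complex.I * ((M + 1 : ℕ) : ℂ) * t) - 1) * (Complex.exp (-(Complex.I * M * t / 2)) * Complex.exp (-(Complex.I * t / 2))) * (-Complex.I / 2) := by
    rw [Complex.sin, sub_mul (Complex.exp (Complex.I * ((M + 1 : ℕ) : ℂ) * t)), ← Complex.exp_add, ← Complex.exp_add, one_mul]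
    push_cast
    rw [show Complex.I * ((M : ℂ) + 1) * t + (-(Complex.I * M * t / 2) + -(Complex.I * t / 2)) = ((M : ℂ) + 1) * t / 2 * Complex.I by ring,
      show (-(Complex.I * M * t / 2) + -(Complex.I * t / 2)) = -(((M : ℂ) + 1) * t / 2) * Complex.I by ring]
    ring
  rw [h1, h2, ← hg]; ring

lemma jkG_eq_pow (r M : ℕ) (t : ℝ) : jkG r M t =
    ((∑ a : Fin (M + 1), Complex.exp (Complex.I * (a : ℕ) * t)) * Complex.exp (-(Complex.I * M * t / 2))) ^ (2 * r) := by
  rw [mul_pow, Fintype.sum_pow, Finset.sum_mul]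
  unfold jkG
  refine Finset.sum_congr rfl fun v _ => ?_
  rw [← Complex.exp_sum, ← Complex.exp_nat_mul, ← Complex.exp_add]
  congr 1
  push_cast
  rw [mul_sub, sub_mul, Finset.mul_sum, Finset.sum_mul]
  ring

lemma jkG_eq (r M : ℕ) (t : ℝ) (h1 : -π ≤ t) (h2 : t ≤ π) :
    (((if t = 0 then ((M : ℝ) + 1) ^ (2 * r)
      else (Real.sin (((M : ℝ) + 1) * t / 2) / Real.sin (t / 2)) ^ (2 * r)) : ℝ) : ℂ) = jkG r M t := by
  rw [jkG_eq_pow]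
  split_ifs with h
  · subst h; simp
  · have hpi := Real.pi_pos
    have hs : Real.sin (t / 2) ≠ 0 := by
      intro h0
      rw [Real.sin_eq_zero_iff_of_lt_of_lt (by linarith) (by linarith)] at h0
      exact h (by linarith)
    rw [jk_dir M t hs]; push_cast; rfl

lemma jkG_cont (r M : ℕ) : Continuous (jkG r M) := by
  unfold jkG; fun_prop

lemma jkG_int (r M : ℕ) (q : ℤ) :
    ∫ t in (-π)..π, jkG r M t * Complex.exp (Complex.I * (q : ℂ) * (t : ℂ)) = 2 * π * (jkMt r M (-q) : ℂ) := by
  have : ∀ t : ℝ, jkG r M t * Complex.exp (Complex.I * (q : ℂ) * (t : ℂ)) =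
      ∑ v : Fin (2 * r) → Fin (M + 1), Complex.exp (Complex.I * (((∑ j, (v j : ℤ)) - r * M + q : ℤ) : ℂ) * (t : ℂ)) := by
    intro t
    unfold jkG
    rw [Finset.sum_mul]
    refine Finset.sum_congr rfl fun v _ => ?_
    rw [← Complex.exp_add]; congr 1; push_cast; ring
  simp only [this]
  rw [intervalIntegral.integral_finsetSum]
  · simp only [jk_int]
    rw [← Finset.sum_filter, Finset.sum_const, nsmul_eq_mul, mul_comm]
    congr 2
    unfold jkMt
    congr 1
    ext v
    simp only [Finset.mem_filter, Finset.mem_univ, true_and]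
    constructor <;> intro h <;> linarith
  · intro v _
    apply Continuous.intervalIntegrable
    fun_prop

lemma jk_main (r M k : ℕ) (hk : 1 ≤ k) (f : ℝ → ℝ) (c : ℤ → ℂ)
    (hsum : Summable fun n : ℤ => ‖c n‖)
    (hser : ∀ y : ℝ, (f y : ℂ) = ∑' n : ℤ, c n * Complex.exp (Complex.I * (n : ℂ) * (y : ℂ))) (x : ℝ) :
    ∫ t in (-π)..π, jkG r M t * (f (x + k * t) : ℂ) =
      2 * π * ∑ n ∈ Finset.Icc (-(r * M : ℤ)) (r * M : ℤ),
        (if (k : ℤ) * |n| ≤ (r * M : ℤ) then (jkMt r M ((k : ℤ) * |n|) : ℂ) else 0) * c n *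
          Complex.exp (Complex.I * (n : ℂ) * (x : ℂ)) := by
  have hexp : ∀ (n : ℤ) (y : ℝ), ‖Complex.exp (Complex.I * (n : ℂ) * (y : ℂ))‖ = 1 := by
    intro n y
    rw [show Complex.I * (n : ℂ) * (y : ℂ) = ((n * y : ℝ) : ℂ) * Complex.I by push_cast; ring]
    exact Complex.norm_exp_ofReal_mul_I _
  have hS : ∀ y : ℝ, Summable fun n : ℤ => c n * Complex.exp (Complex.I * (n : ℂ) * (y : ℂ)) := by
    intro y
    apply Summable.of_norm
    simpa [hexp] using hsum
  have key : HasSum (fun n : ℤ => ∫ t in (-π)..π, jkG r M t * (c n * Complex.exp (Complex.I * (n : ℂ) * ((x + k * t : ℝ) : ℂ))))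
      (∫ t in (-π)..π, jkG r M t * (f (x + k * t) : ℂ)) := by
    apply intervalIntegral.hasSum_integral_of_dominated_convergence (fun n t => ‖jkG r M t‖ * ‖c n‖)
    · intro n
      apply Continuous.aestronglyMeasurable
      have := jkG_cont r M
      fun_prop
    · intro n
      refine Filter.Eventually.of_forall fun t _ => ?_
      rw [norm_mul, norm_mul, hexp, mul_one]
    · exact Filter.Eventually.of_forall fun t _ => hsum.mul_left _
    · apply Continuous.intervalIntegrable
      simp only [tsum_mul_left]
      have := jkG_cont r M
      fun_prop
    · refine Filter.Eventually.of_forall fun t _ => ?_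
      rw [hser]
      exact (hS _).hasSum.mul_left _
  have hterm : ∀ n : ℤ, ∫ t in (-π)..π, jkG r M t * (c n * Complex.exp (Complex.I * (n : ℂ) * ((x + k * t : ℝ) : ℂ))) =
      2 * π * ((if (k : ℤ) * |n| ≤ (r * M : ℤ) then (jkMt r M ((k : ℤ) * |n|) : ℂ) else 0) * c n *
          Complex.exp (Complex.I * (n : ℂ) * (x : ℂ))) := by
    intro n
    have : ∀ t : ℝ, jkG r M t * (c n * Complex.exp (Complex.I * (n : ℂ) * ((x + k * t : ℝ) : ℂ))) =
        (c n * Complex.exp (Complex.I * (n : ℂ) * (x : ℂ))) *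
          (jkG r M t * Complex.exp (Complex.I * (((k : ℤ) * n : ℤ) : ℂ) * (t : ℂ))) := by
      intro t
      rw [show Complex.I * (n : ℂ) * ((x + k * t : ℝ) : ℂ) = Complex.I * (n : ℂ) * (x : ℂ) + Complex.I * (((k : ℤ) * n : ℤ) : ℂ) * (t : ℂ) by push_cast; ring,
        Complex.exp_add]
      ring
    simp only [this]
    rw [intervalIntegral.integral_const_mul, jkG_int, ← jkMt_abs]
    split_ifs with h
    · ring
    · rw [jkMt_zero _ _ _ (not_le.mp h)]; simp
  simp only [hterm] at key
  rw [Finset.mul_sum]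
  refine key.unique (hasSum_sum_of_ne_finset_zero ?_)
  intro n hn
  have : ¬ ((k : ℤ) * |n| ≤ (r * M : ℤ)) := by
    intro h
    apply hn
    rw [Finset.mem_Icc, ← abs_le]
    have : (1 : ℤ) ≤ k := by exact_mod_cast hk
    nlinarith [abs_nonneg n]
  rw [if_neg this]; simp


/-- The univariate Jackson operator `T_{N,K} f` is a trigonometric polynomial:
`(T_{N,K} f)(x) = (2π/λ) ∑_{n=-r⌊N/2⌋}^{r⌊N/2⌋} m_{n,K} f̂(n) e^{inx}`, where
`r = ⌈(K+3)/2⌉`, `m_{n,K} = ∑_{1≤k≤K+1, k|n|≤r⌊N/2⌋} (-1)^{k+1} C(K+1,k) m̃_{k|n|}`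
and `m̃_l` counts tuples in `{-⌊N/2⌋/2,…,⌊N/2⌋/2}^{2r}` summing to `l`. -/
theorem jackson_operator_is_trig_poly (K N : ℕ) (hN : 1 ≤ N)
    (f : ℝ → ℝ) (hf_cont : Continuous f) (hf_per : Function.Periodic f (2 * π))
    (c : ℤ → ℂ)
    (hc : ∀ n : ℤ, c n = (1 / (2 * π)) *
      ∫ s in (-π)..π, Complex.exp (-Complex.I * (n : ℂ) * (s : ℂ)) * (f s : ℂ))
    (hsum : Summable fun n : ℤ => ‖c n‖)
    (hser : ∀ y : ℝ, (f y : ℂ) = ∑' n : ℤ, c n * Complex.exp (Complex.I * (n : ℂ) * (y : ℂ)))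
    (lam : ℝ) (hlam : 0 < lam) :
    let r : ℕ := (K + 3 + 1) / 2
    let M : ℕ := N / 2
    let gker : ℝ → ℝ := fun t =>
      if t = 0 then ((M : ℝ) + 1) ^ (2 * r)
      else (Real.sin (((M : ℝ) + 1) * t / 2) / Real.sin (t / 2)) ^ (2 * r)
    let J : ℝ → ℝ := fun t => (1 / lam) * gker t
    let mt : ℤ → ℕ := fun l =>
      (Finset.univ.filter fun v : Fin (2 * r) → Fin (M + 1) =>
        (∑ j, ((v j : ℤ))) = l + r * M).card
    let m : ℤ → ℤ := fun n =>
      ∑ k ∈ (Finset.Icc 1 (K + 1)).filter (fun (k : ℕ) => (k : ℤ) * |n| ≤ (r * M : ℤ)),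
        (-1 : ℤ) ^ (k + 1) * (Nat.choose (K + 1) k : ℤ) * (mt ((k : ℤ) * |n|) : ℤ)
    (∫ t in (-π)..π, J t) = 1 →
    ∀ x : ℝ,
      ((∫ t in (-π)..π, J t * ∑ k ∈ Finset.Icc 1 (K + 1),
          (-1 : ℝ) ^ (k + 1) * (Nat.choose (K + 1) k : ℝ) * f (x + k * t) : ℝ) : ℂ)
        = (2 * π / lam : ℂ) *
            ∑ n ∈ Finset.Icc (-(r * M : ℤ)) (r * M : ℤ),
              (m n : ℂ) * c n * Complex.exp (Complex.I * (n : ℂ) * (x : ℂ)) := by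
  intro r M gker J mt m _ x
  have hm : ∀ n : ℤ, (m n : ℂ) = ∑ k ∈ Finset.Icc 1 (K + 1), (-1 : ℂ) ^ (k + 1) * (Nat.choose (K + 1) k : ℂ) *
      (if (k : ℤ) * |n| ≤ (r * M : ℤ) then (jkMt r M ((k : ℤ) * |n|) : ℂ) else 0) := by
    intro n
    simp only [m, Finset.sum_filter]
    rw [Int.cast_sum]
    refine Finset.sum_congr rfl fun k _ => ?_
    split_ifs
    · push_cast; rfl
    · simp
  have hlhs : ((∫ t in (-π)..π, J t * ∑ k ∈ Finset.Icc 1 (K + 1),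
          (-1 : ℝ) ^ (k + 1) * (Nat.choose (K + 1) k : ℝ) * f (x + k * t) : ℝ) : ℂ) =
      ∫ t in (-π)..π, ∑ k ∈ Finset.Icc 1 (K + 1), (1 / (lam : ℂ) * ((-1 : ℂ) ^ (k + 1) * (Nat.choose (K + 1) k : ℂ))) *
        (jkG r M t * (f (x + k * t) : ℂ)) := by
    rw [← intervalIntegral.integral_ofReal]
    apply intervalIntegral.integral_congr
    intro t ht
    rw [Set.uIcc_of_le (by linarith [Real.pi_pos])] at ht
    have hg : ((gker t : ℝ) : ℂ) = jkG r M t := jkG_eq r M t ht.1 ht.2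
    simp only [J]
    push_cast
    rw [hg, Finset.mul_sum]
    refine Finset.sum_congr rfl fun k _ => ?_
    ring
  rw [hlhs, intervalIntegral.integral_finsetSum]
  · simp only [intervalIntegral.integral_const_mul]
    rw [Finset.sum_congr rfl (fun k hk => by
      rw [jk_main r M k (Finset.mem_Icc.mp hk).1 f c hsum hser x])]
    simp only [hm, Finset.mul_sum, Finset.sum_mul]
    rw [Finset.sum_comm]
    refine Finset.sum_congr rfl fun n _ => Finset.sum_congr rfl fun k _ => ?_
    ring
  · intro k _
    apply Continuous.intervalIntegrable
    have := jkG_cont r M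
    fun_prop
end

section
/- Let K ∈ ℕ₀ and let f : ℝ → ℝ be 2π-periodic and (K+1)-times continuously differentiable. Then there exists a constant C_K > 0 depending only on K such that for every N ≥ 1 there exists a real trigonometric polynomial T of degree at most ⌈(K+3)/2⌉·⌊N/2⌋ with sup_{x∈ℝ} |f(x) − T(x)| ≤ C_K · ‖f^{(K+1)}‖_∞ / N^{K+1}. -/
open Real

def JTrig (n : ℕ) (T : ℝ → ℝ) : Prop :=
  ∃ a b : ℕ → ℝ, ∀ x : ℝ, T x = ∑ k ∈ Finset.range (n + 1),
    (a k * Real.cos (k * x) + b k * Real.sin (k * x))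

lemma JTrig.add {n : ℕ} {S T : ℝ → ℝ} (hS : JTrig n S) (hT : JTrig n T) :
    JTrig n (fun x => S x + T x) := by
  obtain ⟨a, b, h⟩ := hS
  obtain ⟨c, d, h'⟩ := hT
  refine ⟨fun k => a k + c k, fun k => b k + d k, fun x => ?_⟩
  simp only [h, h', ← Finset.sum_add_distrib]
  exact Finset.sum_congr rfl fun k _ => by ring

lemma JTrig.smul {n : ℕ} {S : ℝ → ℝ} (hS : JTrig n S) (r : ℝ) :
    JTrig n (fun x => r * S x) := by
  obtain ⟨a, b, h⟩ := hS
  refine ⟨fun k => r * a k, fun k => r * b k, fun x => ?_⟩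
  simp only [h, Finset.mul_sum]
  exact Finset.sum_congr rfl fun k _ => by ring

lemma JTrig.zero (n : ℕ) : JTrig n (fun _ => 0) := ⟨0, 0, fun x => by simp⟩

lemma JTrig.sum {n : ℕ} {ι : Type*} (s : Finset ι) (F : ι → ℝ → ℝ) (h : ∀ i ∈ s, JTrig n (F i)) :
    JTrig n (fun x => ∑ i ∈ s, F i x) := by
  classical
  induction s using Finset.induction_on with
  | empty => simpa using JTrig.zero n
  | insert i s hi ih =>
    simp only [Finset.sum_insert hi]
    exact (h i (by simp)).add (ih fun j hj => h j (by simp [hj]))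

lemma JTrig.cos {n : ℕ} (m : ℤ) (hm : m.natAbs ≤ n) : JTrig n (fun x => Real.cos (m * x)) := by
  refine ⟨fun k => if k = m.natAbs then 1 else 0, 0, fun x => ?_⟩
  simp only [ite_mul, one_mul, zero_mul, Pi.zero_apply, add_zero]
  rw [Finset.sum_ite_eq' , if_pos (by simp; omega)]
  rcases Int.natAbs_eq m with h | h
  · rw [h]; simp
  · rw [h]; simp [neg_mul]

lemma JTrig.sin {n : ℕ} (m : ℤ) (hm : m.natAbs ≤ n) : JTrig n (fun x => Real.sin (m * x)) := by
  have : JTrig n (fun x => Real.sin (m.natAbs * x)) := by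
    refine ⟨0, fun k => if k = m.natAbs then 1 else 0, fun x => ?_⟩
    simp only [ite_mul, one_mul, zero_mul, Pi.zero_apply, zero_add]
    rw [Finset.sum_ite_eq' , if_pos (by simp; omega)]
  rcases Int.natAbs_eq m with h | h
  · rw [h]; simpa using this
  · rw [h]; simpa [neg_mul] using this.smul (-1)

lemma jack_conv (f : ℝ → ℝ) (hf : Continuous f) (hp : Function.Periodic f (2 * π)) (m : ℤ) (x : ℝ) :
    ∫ t in (-π)..π, f (x + t) * Real.cos (m * t) =
      (∫ u in (-π)..π, f u * Real.cos (m * u)) * Real.cos (m * x) +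
      (∫ u in (-π)..π, f u * Real.sin (m * u)) * Real.sin (m * x) := by
  have h1 : ∫ t in (-π)..π, f (x + t) * Real.cos (m * t) =
      ∫ t in (-π)..π, (fun u => f u * Real.cos (m * (u - x))) (t + x) := by
    congr 1; ext t; simp [add_comm]
  have hper : Function.Periodic (fun u => f u * Real.cos (m * (u - x))) (2 * π) := by
    intro u
    simp only [hp u]
    have : (m : ℝ) * (u + 2 * π - x) = m * (u - x) + m * (2 * π) := by ring
    rw [this, Real.cos_add_int_mul_two_pi]
  rw [h1, intervalIntegral.integral_comp_add_right (fun u => f u * Real.cos (m * (u - x)))]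
  have h2 := hper.intervalIntegral_add_eq (-π + x) (-π)
  rw [show -π + x + 2 * π = π + x by ring, show -π + 2 * π = π by ring] at h2
  rw [h2, ← intervalIntegral.integral_mul_const, ← intervalIntegral.integral_mul_const,
    ← intervalIntegral.integral_add]
  · congr 1; ext u; rw [mul_sub, Real.cos_sub]; ring
  · exact Continuous.intervalIntegrable (by fun_prop) _ _
  · exact Continuous.intervalIntegrable (by fun_prop) _ _

lemma jack_conv_trig (f : ℝ → ℝ) (hf : Continuous f) (hp : Function.Periodic f (2 * π)) (n : ℕ)
    (m : ℤ) (hm : m.natAbs ≤ n) :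
    JTrig n (fun x => ∫ t in (-π)..π, f (x + t) * Real.cos (m * t)) := by
  simp only [jack_conv f hf hp m]
  exact ((JTrig.cos m hm).smul _).add ((JTrig.sin m hm).smul _)

lemma jack_int_cos (m : ℤ) : ∫ t in (-π)..π, Real.cos (m * t) = if m = 0 then 2 * π else 0 := by
  split_ifs with h
  · subst h; simp; ring
  · have h0 : (m : ℝ) ≠ 0 := by exact_mod_cast h
    rw [intervalIntegral.integral_comp_mul_left (fun t => Real.cos t) h0]
    simp

lemma jack_int_cos_cos (m : ℤ) : ∫ t in (-π)..π, Real.cos (m * t) * Real.cos t =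
    (if m + 1 = 0 then π else 0) + (if m - 1 = 0 then π else 0) := by
  have : ∀ t : ℝ, Real.cos (m * t) * Real.cos t =
      (1 / 2) * Real.cos ((m + 1 : ℤ) * t) + (1 / 2) * Real.cos ((m - 1 : ℤ) * t) := by
    intro t
    push_cast
    rw [add_mul, sub_mul, one_mul, Real.cos_add, Real.cos_sub]; ring
  simp only [this]
  rw [intervalIntegral.integral_add (Continuous.intervalIntegrable (by fun_prop) _ _)
    (Continuous.intervalIntegrable (by fun_prop) _ _), intervalIntegral.integral_const_mul,
    intervalIntegral.integral_const_mul, jack_int_cos, jack_int_cos]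
  split_ifs <;> ring

noncomputable def jker (n : ℕ) (a : ℕ → ℝ) (t : ℝ) : ℝ :=
  ∑ j ∈ Finset.range (n + 1), ∑ k ∈ Finset.range (n + 1),
    a j * a k * Real.cos (((j : ℤ) - (k : ℤ) : ℤ) * t)

lemma jker_nonneg (n : ℕ) (a : ℕ → ℝ) (t : ℝ) : 0 ≤ jker n a t := by
  have : jker n a t = (∑ j ∈ Finset.range (n + 1), a j * Real.cos (j * t)) ^ 2 +
      (∑ j ∈ Finset.range (n + 1), a j * Real.sin (j * t)) ^ 2 := by
    rw [sq, sq, Finset.sum_mul_sum, Finset.sum_mul_sum, ← Finset.sum_add_distrib]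
    refine Finset.sum_congr rfl fun j _ => ?_
    rw [← Finset.sum_add_distrib]
    refine Finset.sum_congr rfl fun k _ => ?_
    push_cast
    rw [sub_mul, Real.cos_sub]; ring
  rw [this]; positivity

lemma jker_cont (n : ℕ) (a : ℕ → ℝ) : Continuous (jker n a) := by
  unfold jker; fun_prop

lemma jker_int_mul (n : ℕ) (a : ℕ → ℝ) (g : ℝ → ℝ) (hg : Continuous g) :
    ∫ t in (-π)..π, g t * jker n a t = ∑ j ∈ Finset.range (n + 1), ∑ k ∈ Finset.range (n + 1),
      a j * a k * ∫ t in (-π)..π, g t * Real.cos (((j : ℤ) - (k : ℤ) : ℤ) * t) := by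
  simp only [jker, Finset.mul_sum]
  rw [intervalIntegral.integral_finsetSum]
  · refine Finset.sum_congr rfl fun j _ => ?_
    rw [intervalIntegral.integral_finsetSum]
    · refine Finset.sum_congr rfl fun k _ => ?_
      rw [← intervalIntegral.integral_const_mul]
      congr 1; ext t; ring
    · intro k _; exact Continuous.intervalIntegrable (by fun_prop) _ _
  · intro k _; exact Continuous.intervalIntegrable (by fun_prop) _ _

lemma jker_int (n : ℕ) (a : ℕ → ℝ) :
    ∫ t in (-π)..π, jker n a t = 2 * π * ∑ j ∈ Finset.range (n + 1), a j ^ 2 := by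
  have := jker_int_mul n a (fun _ => 1) continuous_const
  simp only [one_mul] at this
  rw [this, Finset.mul_sum]
  refine Finset.sum_congr rfl fun j hj => ?_
  simp only [jack_int_cos, sub_eq_zero, Nat.cast_inj, mul_ite, mul_zero]
  rw [Finset.sum_ite_eq, if_pos hj]; ring

lemma jker_int_cos (n : ℕ) :
    ∫ t in (-π)..π, Real.cos t * jker n (fun j => Real.sin ((j + 1) * (π / (n + 2)))) t =
      Real.cos (π / (n + 2)) * (2 * π * ∑ j ∈ Finset.range (n + 1),
        (Real.sin (((j : ℝ) + 1) * (π / (n + 2)))) ^ 2) := by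
  rw [jker_int_mul n _ _ Real.continuous_cos, Finset.mul_sum, Finset.mul_sum]
  refine Finset.sum_congr rfl fun j hj => ?_
  have hj' : j ≤ n := by simpa [Nat.lt_succ_iff] using hj
  have e : ∀ k : ℕ, ∫ t in (-π)..π, Real.cos t * Real.cos (((j : ℤ) - (k : ℤ) : ℤ) * t) =
     (if k = j + 1 then π else 0) + (if j = k + 1 then π else 0) := by
    intro k
    have := jack_int_cos_cos ((j : ℤ) - k)
    simp only [mul_comm (Real.cos _) (Real.cos (((j : ℤ) - (k : ℤ) : ℤ) * _))]
    rw [this]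
    congr 1
    · exact if_congr (by omega) rfl rfl
    · exact if_congr (by omega) rfl rfl
  simp only [e, mul_add, mul_ite, mul_zero, Finset.sum_add_distrib]
  set θ : ℝ := π / (n + 2) with hθ
  have s1 : (∑ k ∈ Finset.range (n + 1), if k = j + 1 then
      Real.sin (j * θ + 1 * θ) * Real.sin (k * θ + 1 * θ) * π else 0) =
      Real.sin (j * θ + θ) * Real.sin (j * θ + 2 * θ) * π := by
    rw [Finset.sum_ite_eq']
    split_ifs with h
    · push_cast; ring_nf
    · have : j = n := by simp at h; omega
      have h2 : (j : ℝ) * θ + 2 * θ = π := by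
        rw [this, hθ]; field_simp
      rw [h2]; simp
  have s2 : (∑ k ∈ Finset.range (n + 1), if j = k + 1 then
      Real.sin (j * θ + 1 * θ) * Real.sin (k * θ + 1 * θ) * π else 0) =
      Real.sin (j * θ + θ) * Real.sin (j * θ) * π := by
    rcases j with _ | i
    · simp
    · simp only [Nat.add_right_cancel_iff]
      rw [Finset.sum_ite_eq, if_pos (by simp; omega)]
      push_cast; ring_nf
  simp only [add_mul] at *
  rw [s1, s2]
  have h3 : Real.sin (j * θ + 2 * θ) + Real.sin (j * θ) = 2 * Real.cos θ * Real.sin (j * θ + θ) := by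
    have e1 : (j : ℝ) * θ + 2 * θ = (j * θ + θ) + θ := by ring
    have e2 : Real.sin (j * θ) = Real.sin ((j * θ + θ) - θ) := by congr 1; ring
    rw [e1, e2, Real.sin_add (j * θ + θ), Real.sin_sub]; ring
  rw [one_mul]
  linear_combination Real.sin (j * θ + θ) * π * h3

lemma jack_base (f : ℝ → ℝ) (hp : Function.Periodic f (2 * π)) (hf : Differentiable ℝ f) (M : ℝ)
    (hM : ∀ y, |deriv f y| ≤ M) (n : ℕ) :
    ∃ T, JTrig n T ∧ ∀ x, |f x - T x| ≤ (1 / 2 + π ^ 4 / 8) * M / (n + 1) := by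
  set θ : ℝ := π / (n + 2) with hθ
  set a : ℕ → ℝ := fun j => Real.sin ((j + 1) * θ) with ha
  set A : ℝ := 2 * π * ∑ j ∈ Finset.range (n + 1), a j ^ 2 with hA
  have hM0 : 0 ≤ M := (abs_nonneg _).trans (hM 0)
  have hθ0 : 0 < θ := by positivity
  have hθπ : θ < π := by
    rw [hθ, div_lt_iff₀ (by positivity)]; nlinarith [pi_pos, (Nat.cast_nonneg n : (0:ℝ) ≤ n)]
  have hA0 : 0 < A := by
    have : 0 < ∑ j ∈ Finset.range (n + 1), a j ^ 2 := by
      refine Finset.sum_pos' (fun _ _ => sq_nonneg _) ⟨0, by simp, ?_⟩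
      have : 0 < a 0 := by simpa [ha] using Real.sin_pos_of_pos_of_lt_pi hθ0 hθπ
      positivity
    positivity
  have I1 : ∫ t in (-π)..π, jker n a t = A := jker_int n a
  have I2 : ∫ t in (-π)..π, Real.cos t * jker n a t = Real.cos θ * A := jker_int_cos n
  have kc : Continuous (jker n a) := jker_cont n a
  have fc : Continuous f := hf.continuous
  refine ⟨fun x => A⁻¹ * ∫ t in (-π)..π, f (x + t) * jker n a t, ?_, fun x => ?_⟩
  · refine JTrig.smul ?_ _
    have : ∀ x, ∫ t in (-π)..π, f (x + t) * jker n a t = _ :=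
      fun x => jker_int_mul n a (fun t => f (x + t)) (by fun_prop)
    simp only [this]
    refine JTrig.sum _ _ fun j hj => JTrig.sum _ _ fun k hk => JTrig.smul ?_ _
    simp only [Finset.mem_range] at hj hk
    exact jack_conv_trig f fc hp n _ (by omega)
  · have lip : ∀ t, |f (x + t) - f x| ≤ M * |t| := by
      intro t
      have := Convex.norm_image_sub_le_of_norm_deriv_le (f := f) (s := Set.univ) (x := x) (y := x + t)
        (C := M) (fun y _ => hf y) (fun y _ => hM y) convex_univ trivial trivial
      simpa using this
    set h : ℝ := 1 / (n + 2) with hh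
    have h0 : 0 < h := by positivity
    have pt : ∀ t ∈ Set.Icc (-π) π, |(f (x + t) - f x) * jker n a t| ≤
        (M * (h / 2 + π ^ 2 / (4 * h))) * jker n a t -
          (M * (π ^ 2 / (4 * h))) * (Real.cos t * jker n a t) := by
      intro t ht
      rw [abs_mul, abs_of_nonneg (jker_nonneg n a t)]
      have hc := Real.cos_le_one_sub_mul_cos_sq (x := t) (abs_le.2 ht)
      have h2 : t ^ 2 ≤ π ^ 2 / 2 * (1 - Real.cos t) := by
        have : 2 / π ^ 2 * t ^ 2 ≤ 1 - Real.cos t := by linarith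
        calc t ^ 2 = π ^ 2 / 2 * (2 / π ^ 2 * t ^ 2) := by field_simp
          _ ≤ _ := by gcongr
      have h3 : |t| ≤ h / 2 + t ^ 2 / (2 * h) := by
        have : h / 2 + t ^ 2 / (2 * h) - |t| = (|t| - h) ^ 2 / (2 * h) := by
          rw [← sq_abs t]; field_simp; ring
        have : 0 ≤ (|t| - h) ^ 2 / (2 * h) := by positivity
        linarith
      have h4 : |t| ≤ h / 2 + π ^ 2 / (4 * h) * (1 - Real.cos t) := by
        calc |t| ≤ _ := h3
          _ ≤ h / 2 + (π ^ 2 / 2 * (1 - Real.cos t)) / (2 * h) := by gcongr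
          _ = _ := by field_simp; ring
      calc |f (x + t) - f x| * jker n a t
          ≤ (M * (h / 2 + π ^ 2 / (4 * h) * (1 - Real.cos t))) * jker n a t := by
            refine mul_le_mul_of_nonneg_right ((lip t).trans ?_) (jker_nonneg n a t)
            gcongr
        _ = _ := by ring
    have e1 : f x - A⁻¹ * ∫ t in (-π)..π, f (x + t) * jker n a t =
        -(A⁻¹ * ∫ t in (-π)..π, (f (x + t) - f x) * jker n a t) := by
      have : ∫ t in (-π)..π, (f (x + t) - f x) * jker n a t =
          (∫ t in (-π)..π, f (x + t) * jker n a t) - f x * A := by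
        rw [← I1, ← intervalIntegral.integral_const_mul, ← intervalIntegral.integral_sub
          (Continuous.intervalIntegrable (by fun_prop) _ _)
          (Continuous.intervalIntegrable (by fun_prop) _ _)]
        congr 1; ext t; ring
      rw [this]; field_simp; ring
    have e2 : |∫ t in (-π)..π, (f (x + t) - f x) * jker n a t| ≤
        (M * (h / 2 + π ^ 2 / (4 * h))) * A - (M * (π ^ 2 / (4 * h))) * (Real.cos θ * A) := by
      rw [← I2, ← I1, ← intervalIntegral.integral_const_mul, ← intervalIntegral.integral_const_mul,
        ← intervalIntegral.integral_sub
          (Continuous.intervalIntegrable (by fun_prop) _ _)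
          (Continuous.intervalIntegrable (by fun_prop) _ _)]
      have hpi : -π ≤ π := by linarith [pi_pos]
      refine (intervalIntegral.abs_integral_le_integral_abs hpi).trans ?_
      exact intervalIntegral.integral_mono_on hpi (Continuous.intervalIntegrable (by fun_prop) _ _)
          (Continuous.intervalIntegrable (by fun_prop) _ _) pt
    show |f x - A⁻¹ * ∫ t in (-π)..π, f (x + t) * jker n a t| ≤ _
    rw [e1, abs_neg, abs_mul, abs_of_pos (inv_pos.2 hA0)]
    have hcos : 1 - Real.cos θ ≤ θ ^ 2 / 2 := by
      linarith [Real.one_sub_sq_div_two_le_cos (x := θ)]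
    have hθh : θ = π * h := by rw [hθ, hh]; ring
    calc A⁻¹ * |∫ t in (-π)..π, (f (x + t) - f x) * jker n a t|
        ≤ A⁻¹ * ((M * (h / 2 + π ^ 2 / (4 * h))) * A - (M * (π ^ 2 / (4 * h))) * (Real.cos θ * A)) := by
          gcongr
      _ = M * (h / 2 + π ^ 2 / (4 * h) * (1 - Real.cos θ)) := by field_simp; ring
      _ ≤ M * (h / 2 + π ^ 2 / (4 * h) * (θ ^ 2 / 2)) := by gcongr
      _ = (1 / 2 + π ^ 4 / 8) * M * h := by rw [hθh]; field_simp; ring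
      _ ≤ (1 / 2 + π ^ 4 / 8) * M * (1 / (n + 1)) := by
          rw [hh]; gcongr; norm_num
      _ = _ := by ring

lemma jack_ind (K : ℕ) : ∃ C : ℝ, 0 < C ∧ ∀ f : ℝ → ℝ, Function.Periodic f (2 * π) →
    ContDiff ℝ (K + 1) f → ∀ M : ℝ, (∀ y, |iteratedDeriv (K + 1) f y| ≤ M) → ∀ n : ℕ,
    ∃ T, JTrig n T ∧ ∀ x, |f x - T x| ≤ C * M / (n + 1) ^ (K + 1) := by
  have hB : (0 : ℝ) < 1 / 2 + π ^ 4 / 8 := by positivity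
  induction K with
  | zero =>
    refine ⟨1 / 2 + π ^ 4 / 8, hB, fun f hp hf M hM n => ?_⟩
    have := jack_base f hp (hf.differentiable (by norm_num)) M (by simpa using hM) n
    simpa using this
  | succ K ih =>
    obtain ⟨C, hC, ih⟩ := ih
    refine ⟨(1 / 2 + π ^ 4 / 8) * (2 * C), by positivity, fun f hp hf M hM n => ?_⟩
    have hf' : ContDiff ℝ (K + 1) (deriv f) := by
      have : ContDiff ℝ ((K + 1 : WithTop ℕ∞) + 1) f := by exact_mod_cast hf
      exact (contDiff_succ_iff_deriv.1 this).2.2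
    have hfd : Differentiable ℝ f := hf.differentiable (by simp)
    have hp' : Function.Periodic (deriv f) (2 * π) := by
      intro x
      rw [← deriv_comp_add_const]
      congr 1; ext y; exact hp y
    obtain ⟨T, ⟨a, b, hT⟩, hTb⟩ := ih (deriv f) hp' hf' M (by
      intro y; rw [← iteratedDeriv_succ']; exact hM y) n
    set ε : ℝ := C * M / (n + 1) ^ (K + 1) with hε
    set S : ℝ → ℝ := fun x => ∑ k ∈ Finset.range (n + 1),
      ((-(b k / k)) * Real.cos (k * x) + (a k / k) * Real.sin (k * x)) with hS
    have hSd : ∀ x, HasDerivAt S (T x - a 0) x := by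
      intro x
      have h1 : HasDerivAt S (∑ k ∈ Finset.range (n + 1),
        ((-(b k / k)) * (-Real.sin (k * x) * k) + (a k / k) * (Real.cos (k * x) * k))) x := by
        refine HasDerivAt.fun_sum fun k _ => ?_
        have hl : HasDerivAt (fun x : ℝ => (k : ℝ) * x) k x := by
          simpa using (hasDerivAt_id x).const_mul (k : ℝ)
        exact (hl.cos.const_mul _).add (hl.sin.const_mul _)
      convert h1 using 1
      rw [hT, Finset.sum_range_succ', Finset.sum_range_succ']
      simp only [Nat.cast_zero, zero_mul, Real.cos_zero, Real.sin_zero, mul_zero, mul_one, add_zero,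
        add_sub_cancel_right]
      refine Finset.sum_congr rfl fun k _ => ?_
      have : ((k + 1 : ℕ) : ℝ) ≠ 0 := by positivity
      field_simp; ring
    have hSp : Function.Periodic S (2 * π) := by
      intro x
      refine Finset.sum_congr rfl fun k _ => ?_
      rw [mul_add, Real.cos_add_nat_mul_two_pi, Real.sin_add_nat_mul_two_pi]
    have hgd : ∀ x, HasDerivAt (fun x => f x - S x) (deriv f x - (T x - a 0)) x :=
      fun x => (hfd x).hasDerivAt.sub (hSd x)
    have ha0 : |a 0| ≤ ε := by
      obtain ⟨c, _, hc⟩ := exists_hasDerivAt_eq_zero (f := fun x => f x - S x)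
        (a := 0) (b := 2 * π) (by positivity)
        (fun x _ => (hgd x).continuousAt.continuousWithinAt)
        (by
          have e1 := hp 0
          have e2 := hSp 0
          rw [zero_add] at e1 e2
          simp only [e1, e2]) (fun x _ => hgd x)
      have := hTb c
      rwa [show deriv f c - T c = - a 0 by linarith, abs_neg] at this
    obtain ⟨R, hR, hRb⟩ := jack_base (fun x => f x - S x) (fun x => by simp only [hp x, hSp x])
      (fun x => (hgd x).differentiableAt) (2 * ε) (by
        intro y
        rw [(hgd y).deriv]
        calc |deriv f y - (T y - a 0)| = |(deriv f y - T y) + a 0| := by congr 1; ring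
          _ ≤ _ := abs_add_le _ _
          _ ≤ _ := by linarith [hTb y]) n
    refine ⟨fun x => R x + S x, hR.add ⟨_, _, fun x => rfl⟩, fun x => ?_⟩
    calc |f x - (R x + S x)| = |f x - S x - R x| := by congr 1; ring
      _ ≤ _ := hRb x
      _ = _ := by rw [hε, pow_succ _ (K + 1)]; field_simp

theorem jackson_inequality_univariate_smooth (K : ℕ) :
    ∃ C : ℝ, 0 < C ∧
      ∀ f : ℝ → ℝ, Function.Periodic f (2 * π) → ContDiff ℝ (K + 1) f →
        ∀ N : ℕ, 1 ≤ N →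
          ∃ a b : ℕ → ℝ,
            ∀ x : ℝ,
              |f x - (a 0 + ∑ n ∈ Finset.Icc 1 (((K + 3 + 1) / 2) * (N / 2)),
                  (a n * Real.cos (n * x) + b n * Real.sin (n * x)))|
                ≤ C * (⨆ y : ℝ, |iteratedDeriv (K + 1) f y|) / (N : ℝ) ^ (K + 1) := by
  obtain ⟨C, hC, h⟩ := jack_ind K
  refine ⟨C, hC, fun f hp hf N hN => ?_⟩
  have hpd : Function.Periodic (iteratedDeriv (K + 1) f) (2 * π) := by
    intro x
    have := congrFun (iteratedDeriv_comp_add_const (K + 1) f (2 * π)) x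
    rw [← this]
    congr 1; ext y; exact hp y
  have hcd : Continuous (iteratedDeriv (K + 1) f) :=
    hf.continuous_iteratedDeriv (K + 1) (by norm_cast)
  have hbdd : BddAbove (Set.range fun y => |iteratedDeriv (K + 1) f y|) := by
    have hq : Function.Periodic (fun y => |iteratedDeriv (K + 1) f y|) (2 * π) := by
      intro x; simp only [hpd x]
    exact (hq.compact_of_continuous (by positivity) hcd.abs).bddAbove
  have hMb : ∀ y, |iteratedDeriv (K + 1) f y| ≤ ⨆ y : ℝ, |iteratedDeriv (K + 1) f y| :=
    fun y => le_ciSup hbdd y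
  set D := ((K + 3 + 1) / 2) * (N / 2) with hD
  have hDN : N ≤ D + 1 := by
    have h2 : 2 ≤ (K + 3 + 1) / 2 := by omega
    have : 2 * (N / 2) ≤ D := Nat.mul_le_mul_right _ h2
    omega
  obtain ⟨T, ⟨a, b, hT⟩, hb⟩ := h f hp hf _ hMb D
  refine ⟨a, b, fun x => ?_⟩
  have e : T x = a 0 + ∑ n ∈ Finset.Icc 1 D, (a n * Real.cos (n * x) + b n * Real.sin (n * x)) := by
    rw [hT, Finset.range_eq_Ico, Finset.sum_eq_sum_Ico_succ_bot (by omega)]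
    simp only [Nat.cast_zero, zero_mul, Real.cos_zero, Real.sin_zero, mul_zero, mul_one, add_zero]
    rfl
  rw [← e]
  refine (hb x).trans ?_
  have hM0 : 0 ≤ ⨆ y : ℝ, |iteratedDeriv (K + 1) f y| := (abs_nonneg _).trans (hMb 0)
  have hN0 : (0 : ℝ) < N := by exact_mod_cast hN
  have : (N : ℝ) ≤ D + 1 := by exact_mod_cast hDN
  gcongr
end

section
/- Let d ∈ ℕ, K = (K_1,...,K_d) ∈ ℕ₀^d, and let f : ℝ^d → ℝ be continuous, 2π-periodic in each variable, and possess continuous partial derivatives ∂_j^{K_j} f for each j. Then there exists a constant C_K > 0 depending only on K (not on f) such that for every N = (N_1,...,N_d) ∈ ℕ^d there exists a multivariate trigonometric polynomial T of coordinate-wise degree at most (⌈(K_j+3)/2⌉⌊N_j/2⌋)_{j=1,...,d} satisfying sup_{x∈ℝ^d} |f(x) − T(x)| ≤ C_K ∑_{j=1}^d ω_{∂_j^{K_j} f}(1/N_j) / N_j^{K_j}. -/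
open Complex Real

/-- Partial derivative in the `j`-th variable of `g : ℝ^d → ℝ`. -/
noncomputable def partialDerivVar {d : ℕ} (j : Fin d) (g : (Fin d → ℝ) → ℝ) :
    (Fin d → ℝ) → ℝ :=
  fun x => deriv (fun s => g (Function.update x j s)) (x j)

/-- Global modulus of continuity of `g : ℝ^d → ℝ` (shifts of norm `< δ`). -/
noncomputable def modulusOfContinuityMulti {d : ℕ} (g : (Fin d → ℝ) → ℝ) (δ : ℝ) : ℝ :=
  sSup {y : ℝ | ∃ x t : Fin d → ℝ, ‖t‖ < δ ∧ y = |g (x + t) - g x|}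

namespace JacksonAux

noncomputable def trigSpan (D : ℤ) : Submodule ℂ (ℝ → ℂ) :=
  Submodule.span ℂ ((fun (n : ℤ) (t : ℝ) => Complex.exp (Complex.I * n * t)) ''
    (↑(Finset.Icc (-D) D) : Set ℤ))

lemma trigSpan_mul {D₁ D₂ : ℤ} {f g : ℝ → ℂ} (hf : f ∈ trigSpan D₁) (hg : g ∈ trigSpan D₂) :
    f * g ∈ trigSpan (D₁ + D₂) := by
  have h := Submodule.mul_mem_mul hf hg
  unfold trigSpan at h
  rw [Submodule.span_mul_span] at h
  refine Submodule.span_mono ?_ h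
  rintro _ ⟨_, ⟨n, hn, rfl⟩, _, ⟨m, hm, rfl⟩, rfl⟩
  refine ⟨n + m, ?_, ?_⟩
  · simp only [Finset.coe_Icc, Set.mem_Icc] at *
    constructor <;> linarith
  · funext t
    simp only [Pi.mul_apply, ← Complex.exp_add]
    congr 1
    push_cast
    ring

lemma trigSpan_pow {D : ℤ} {f : ℝ → ℂ} (hf : f ∈ trigSpan D) (r : ℕ) :
    f ^ r ∈ trigSpan (r * D) := by
  induction r with
  | zero =>
    refine Submodule.subset_span ⟨0, by simp, ?_⟩
    funext t
    simp
  | succ r ih =>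
    rw [pow_succ]
    have := trigSpan_mul ih hf
    convert this using 2
    push_cast
    ring

noncomputable def dir (m : ℕ) (t : ℝ) : ℂ := ∑ l ∈ Finset.range m, Complex.exp (Complex.I * t) ^ l

lemma dir_cont (m : ℕ) : Continuous (dir m) := by
  unfold dir
  fun_prop

lemma dir_sq_mem (m : ℕ) :
    (fun t => ((‖dir (m + 1) t‖ ^ 2 : ℝ) : ℂ)) ∈ trigSpan m := by
  have : (fun t => ((‖dir (m + 1) t‖ ^ 2 : ℝ) : ℂ)) =
      ∑ k ∈ Finset.range (m + 1), ∑ l ∈ Finset.range (m + 1),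
        (fun t : ℝ => Complex.exp (Complex.I * (((k : ℤ) - (l : ℤ) : ℤ) : ℂ) * t)) := by
    funext t
    rw [Complex.ofReal_pow, ← Complex.mul_conj']
    simp only [dir, map_sum, Finset.sum_mul_sum, Finset.sum_apply]
    refine Finset.sum_congr rfl fun k _ => Finset.sum_congr rfl fun l _ => ?_
    rw [map_pow, ← Complex.exp_conj, ← Complex.exp_nat_mul, ← Complex.exp_nat_mul,
      ← Complex.exp_add]
    congr 1
    simp
    ring
  rw [this]
  refine Submodule.sum_mem _ fun k hk => Submodule.sum_mem _ fun l hl => ?_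
  refine Submodule.subset_span ⟨(k : ℤ) - l, ?_, rfl⟩
  simp only [Finset.mem_range, Finset.coe_Icc, Set.mem_Icc] at *
  omega

lemma dir_le (m : ℕ) (t : ℝ) : ‖dir m t‖ ≤ m := by
  unfold dir
  refine (norm_sum_le _ _).trans ?_
  have : ∀ l ∈ Finset.range m, ‖Complex.exp (Complex.I * t) ^ l‖ ≤ 1 := by
    intro l _
    rw [norm_pow, mul_comm, Complex.norm_exp_ofReal_mul_I, one_pow]
  have h := Finset.sum_le_sum this
  simp only [Finset.sum_const, Finset.card_range, nsmul_eq_mul, mul_one] at h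
  exact h

lemma dir_mul_le (m : ℕ) (t : ℝ) (ht : |t| ≤ π) : ‖dir m t‖ * |t| ≤ π := by
  have h1 := geom_sum_mul (Complex.exp (Complex.I * t)) m
  have h2 : ‖dir m t‖ * ‖Complex.exp (Complex.I * t) - 1‖ ≤ 2 := by
    rw [← norm_mul, dir, h1]
    refine (norm_sub_le _ _).trans ?_
    rw [norm_pow, mul_comm, Complex.norm_exp_ofReal_mul_I, one_pow, norm_one]
    norm_num
  rw [Complex.norm_exp_I_mul_ofReal_sub_one] at h2
  have h3 : 2 / π * |t / 2| ≤ |Real.sin (t / 2)| := by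
    apply Real.mul_abs_le_abs_sin
    rw [abs_div, abs_two]
    linarith
  rw [abs_div, abs_two] at h3
  rw [norm_mul, Real.norm_eq_abs, Real.norm_eq_abs, abs_two] at h2
  have h4 : |t| ≤ π * |Real.sin (t / 2)| := by
    have := mul_le_mul_of_nonneg_left h3 Real.pi_pos.le
    have e : π * (2 / π * (|t| / 2)) = |t| := by field_simp
    linarith
  have h5 := mul_le_mul_of_nonneg_left h4 (norm_nonneg (dir m t))
  nlinarith [Real.pi_pos]

lemma dir_ge (m : ℕ) (hm : 1 ≤ m) (t : ℝ) (ht : |t| ≤ 1 / m) : (m : ℝ) / 2 ≤ ‖dir m t‖ := by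
  refine le_trans ?_ (Complex.re_le_norm _)
  unfold dir
  rw [Complex.re_sum]
  have hm0 : (0 : ℝ) < m := by exact_mod_cast hm
  have : ∀ l ∈ Finset.range m, (1 / 2 : ℝ) ≤ (Complex.exp (Complex.I * t) ^ l).re := by
    intro l hl
    have e : Complex.exp (Complex.I * t) ^ l = Complex.exp (((l * t : ℝ) : ℂ) * Complex.I) := by
      rw [← Complex.exp_nat_mul]
      congr 1
      push_cast
      ring
    rw [e, Complex.exp_ofReal_mul_I_re]
    refine le_trans ?_ (Real.one_sub_sq_div_two_le_cos)
    have h1 : |(l : ℝ) * t| ≤ 1 := by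
      rw [abs_mul, Nat.abs_cast]
      have : (l : ℝ) ≤ m := by exact_mod_cast (Finset.mem_range.mp hl).le
      calc (l : ℝ) * |t| ≤ m * (1 / m) := by gcongr
        _ = 1 := by field_simp
    have h2 := (sq_le_one_iff_abs_le_one _).mpr h1
    linarith
  have := Finset.sum_le_sum this
  simp only [Finset.sum_const, Finset.card_range, nsmul_eq_mul] at this
  linarith

lemma integral_cauchy_le (m : ℕ) (hm : 1 ≤ m) :
    ∫ t in (-π)..π, (1 + ((m : ℝ) * t) ^ 2)⁻¹ ≤ π / m := by
  have hm0 : (0 : ℝ) < m := by exact_mod_cast hm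
  rw [intervalIntegral.integral_comp_mul_left (fun x : ℝ => (1 + x ^ 2)⁻¹) hm0.ne',
    integral_inv_one_add_sq, smul_eq_mul, div_eq_inv_mul]
  gcongr
  have := Real.arctan_lt_pi_div_two (m * π)
  have := Real.neg_pi_div_two_lt_arctan (m * -π)
  linarith

lemma pointwise_bound (K r m N : ℕ) (hr : K + 3 ≤ 2 * r) (hN : N ≤ 2 * m) (t : ℝ)
    (ht : |t| ≤ π) :
    ‖dir m t‖ ^ (2 * r) * (|t| ^ K * (1 + N * |t|)) * (N : ℝ) ^ K ≤
      2 ^ (K + 1) * (5 * m) ^ (2 * r) * (1 + ((m : ℝ) * t) ^ 2)⁻¹ := by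
  set u := |t| with hu
  have hu0 : 0 ≤ u := abs_nonneg t
  set a : ℝ := 1 + m * u with ha
  have ha1 : 1 ≤ a := by
    have : 0 ≤ (m : ℝ) * u := by positivity
    linarith
  have hNr : (N : ℝ) ≤ 2 * m := by exact_mod_cast hN
  have h1 : ‖dir m t‖ * a ≤ 5 * m := by
    have h1 := dir_le m t
    have h2 := dir_mul_le m t ht
    have h3 : ‖dir m t‖ * a = ‖dir m t‖ + m * (‖dir m t‖ * u) := by rw [ha]; ring
    rw [h3]
    have h4 : (m : ℝ) * (‖dir m t‖ * u) ≤ m * 4 :=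
      mul_le_mul_of_nonneg_left (h2.trans Real.pi_le_four) (by positivity)
    linarith
  have h2 : u ^ K * (1 + N * u) * (N : ℝ) ^ K ≤ (2 * a) ^ (K + 1) := by
    have hx : 1 + N * u ≤ 2 * a := by
      have : (N : ℝ) * u ≤ 2 * m * u := by gcongr
      rw [ha]; linarith
    have hy : (N : ℝ) * u ≤ 2 * a := by linarith
    calc u ^ K * (1 + N * u) * (N : ℝ) ^ K = (N * u) ^ K * (1 + N * u) := by
          rw [mul_pow]; ring
      _ ≤ (2 * a) ^ K * (2 * a) := by gcongr
      _ = (2 * a) ^ (K + 1) := by ring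
  have hq : 1 + ((m : ℝ) * t) ^ 2 ≤ a ^ 2 := by
    have : ((m : ℝ) * t) ^ 2 = (m * u) ^ 2 := by rw [mul_pow, mul_pow, hu, sq_abs]
    rw [this, ha]
    have : 0 ≤ (m : ℝ) * u := by positivity
    nlinarith
  rw [← div_eq_mul_inv, le_div_iff₀ (by positivity)]
  calc ‖dir m t‖ ^ (2 * r) * (u ^ K * (1 + N * u)) * (N : ℝ) ^ K * (1 + ((m : ℝ) * t) ^ 2)
      = ‖dir m t‖ ^ (2 * r) * (u ^ K * (1 + N * u) * (N : ℝ) ^ K) * (1 + ((m : ℝ) * t) ^ 2) := by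
        ring
    _ ≤ ‖dir m t‖ ^ (2 * r) * (2 * a) ^ (K + 1) * a ^ 2 := by gcongr
    _ = 2 ^ (K + 1) * (‖dir m t‖ ^ (2 * r) * a ^ (K + 3)) := by rw [mul_pow]; ring
    _ ≤ 2 ^ (K + 1) * (‖dir m t‖ ^ (2 * r) * a ^ (2 * r)) := by gcongr
    _ = 2 ^ (K + 1) * (‖dir m t‖ * a) ^ (2 * r) := by rw [mul_pow]
    _ ≤ _ := by gcongr

lemma mass_ge (r m : ℕ) (hm : 1 ≤ m) :
    2 / m * ((m : ℝ) / 2) ^ (2 * r) ≤ ∫ t in (-π)..π, ‖dir m t‖ ^ (2 * r) := by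
  have hm0 : (0 : ℝ) < m := by exact_mod_cast hm
  have hc : Continuous fun t => ‖dir m t‖ ^ (2 * r) := ((dir_cont m).norm).pow _
  have hle : 1 / (m : ℝ) ≤ π := by
    have : 1 / (m : ℝ) ≤ 1 := by
      rw [div_le_one hm0]; exact_mod_cast hm
    linarith [Real.pi_gt_three]
  have hp : 0 < 1 / (m : ℝ) := by positivity
  calc 2 / m * ((m : ℝ) / 2) ^ (2 * r) = ∫ t in (-(1 / (m : ℝ)))..(1 / m), ((m : ℝ) / 2) ^ (2 * r) := by
        rw [intervalIntegral.integral_const, smul_eq_mul]; ring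
    _ ≤ ∫ t in (-(1 / (m : ℝ)))..(1 / m), ‖dir m t‖ ^ (2 * r) := by
        refine intervalIntegral.integral_mono_on (by linarith) (by simp)
          (hc.intervalIntegrable _ _) fun t ht => ?_
        gcongr
        exact dir_ge m hm t (abs_le.mpr ht)
    _ ≤ _ := by
        refine intervalIntegral.integral_mono_interval (by linarith) (by linarith) hle ?_
          (hc.intervalIntegrable _ _)
        exact Filter.Eventually.of_forall fun t => by positivity

lemma kernel_exists (K : ℕ) : ∃ C : ℝ, 0 < C ∧ ∀ N : ℕ, 1 ≤ N → ∃ J : ℝ → ℝ,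
    Continuous J ∧ (∀ t, 0 ≤ J t) ∧ (∫ t in (-π)..π, J t = 1) ∧
    (∫ t in (-π)..π, J t * (|t| ^ K * (1 + N * |t|)) ≤ C / (N : ℝ) ^ K) ∧
    ∃ a : ℤ → ℂ, ∀ t : ℝ, (J t : ℂ) =
      ∑ n ∈ Finset.Icc (-(((K + 3 + 1) / 2) * (N / 2) : ℤ)) (((K + 3 + 1) / 2) * (N / 2) : ℤ),
        a n * Complex.exp (Complex.I * n * t) := by
  set r := (K + 3 + 1) / 2 with hr
  refine ⟨2 ^ (K + 1) * 10 ^ (2 * r) * (π / 2), by positivity, fun N hN => ?_⟩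
  set m := N / 2 + 1 with hm
  have hm1 : 1 ≤ m := by omega
  have hm0 : (0 : ℝ) < m := by exact_mod_cast hm1
  have hN0 : (0 : ℝ) < N := by exact_mod_cast hN
  have hmass := mass_ge r m hm1
  have hc : Continuous fun t => ‖dir m t‖ ^ (2 * r) := ((dir_cont m).norm).pow _
  set lam := ∫ t in (-π)..π, ‖dir m t‖ ^ (2 * r) with hlam
  have hl0 : 0 < lam := lt_of_lt_of_le (by positivity) hmass
  refine ⟨fun t => lam⁻¹ * ‖dir m t‖ ^ (2 * r), by fun_prop, fun t => by positivity, ?_, ?_, ?_⟩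
  · rw [intervalIntegral.integral_const_mul, ← hlam, inv_mul_cancel₀ hl0.ne']
  · rw [le_div_iff₀ (by positivity), ← intervalIntegral.integral_mul_const]
    have hcc : Continuous fun t : ℝ => (1 + ((m : ℝ) * t) ^ 2)⁻¹ := by
      refine Continuous.inv₀ (by fun_prop) fun t => by positivity
    calc ∫ t in (-π)..π, lam⁻¹ * ‖dir m t‖ ^ (2 * r) * (|t| ^ K * (1 + N * |t|)) * (N : ℝ) ^ K
        ≤ ∫ t in (-π)..π, lam⁻¹ * (2 ^ (K + 1) * (5 * m) ^ (2 * r)) * (1 + ((m : ℝ) * t) ^ 2)⁻¹ := by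
          refine intervalIntegral.integral_mono_on (by linarith [Real.pi_pos])
            (Continuous.intervalIntegrable (by fun_prop) _ _)
            (Continuous.intervalIntegrable (by fun_prop) _ _) fun t ht => ?_
          have := pointwise_bound K r m N (by omega) (by omega) t (abs_le.mpr ht)
          have h2 := mul_le_mul_of_nonneg_left this (inv_nonneg.mpr hl0.le)
          calc _ = _ := ?_
            _ ≤ _ := h2
            _ = _ := ?_
          · ring
          · ring
      _ ≤ lam⁻¹ * (2 ^ (K + 1) * (5 * m) ^ (2 * r)) * (π / m) := by
          rw [intervalIntegral.integral_const_mul]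
          gcongr
          exact integral_cauchy_le m hm1
      _ = lam⁻¹ * (2 ^ (K + 1) * 10 ^ (2 * r) * (π / 2) * (2 / m * ((m : ℝ) / 2) ^ (2 * r))) := by
          have : (5 * (m : ℝ)) = 10 * (m / 2) := by ring
          rw [this, mul_pow]
          field_simp
      _ ≤ lam⁻¹ * (2 ^ (K + 1) * 10 ^ (2 * r) * (π / 2) * lam) := by gcongr
      _ = _ := by field_simp
  · have h1 := trigSpan_pow (dir_sq_mem (N / 2)) r
    have h2 := Submodule.smul_mem _ ((lam⁻¹ : ℝ) : ℂ) h1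
    have e : ((r : ℤ) * ((N / 2 : ℕ) : ℤ)) = (((K + 3 + 1) / 2) * (N / 2) : ℤ) := by
      rw [hr]; push_cast; rfl
    unfold trigSpan at h2
    rw [e, Submodule.mem_span_image_finset_iff_exists_fun'] at h2
    obtain ⟨a, ha⟩ := h2
    refine ⟨a, fun t => ?_⟩
    have := congrFun ha t
    simp only [Finset.sum_apply, Pi.smul_apply, smul_eq_mul, Pi.pow_apply] at this
    rw [this]
    push_cast
    rw [pow_mul]

end JacksonAux
namespace JacksonAux

/-- One Fourier mode of the averaging operator in direction `e`. -/
noncomputable def Aop {d : ℕ} (e : Fin d → ℝ) (k : ℕ) (m : ℤ) (g : (Fin d → ℝ) → ℂ)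
    (x : Fin d → ℝ) : ℂ :=
  ∫ t in (-π)..π, Complex.exp (Complex.I * m * t) * g (x + (((k : ℝ) + 1) * t) • e)

/-- The generalized Jackson operator in direction `e`. -/
noncomputable def Lop {d : ℕ} (e : Fin d → ℝ) (K : ℕ) (J : ℝ → ℝ) (g : (Fin d → ℝ) → ℂ)
    (x : Fin d → ℝ) : ℂ :=
  ∫ t in (-π)..π, (J t : ℂ) * ∑ k ∈ Finset.range (K + 1),
    ((-1) ^ k * ((K + 1).choose (k + 1) : ℂ)) * g (x + (((k : ℝ) + 1) * t) • e)

lemma Aop_cont {d : ℕ} (e : Fin d → ℝ) (k : ℕ) (m : ℤ) (g : (Fin d → ℝ) → ℂ)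
    (hg : Continuous g) : Continuous (Aop e k m g) := by
  unfold Aop
  apply intervalIntegral.continuous_parametric_intervalIntegral_of_continuous'
  unfold Function.uncurry
  fun_prop

lemma Aop_shift {d : ℕ} (e v : Fin d → ℝ) (k : ℕ) (m : ℤ) (g : (Fin d → ℝ) → ℂ) (z : ℂ)
    (hv : ∀ x, g (x + v) = z * g x) (x : Fin d → ℝ) :
    Aop e k m g (x + v) = z * Aop e k m g x := by
  unfold Aop
  rw [← intervalIntegral.integral_const_mul]
  congr 1
  funext t
  rw [add_right_comm, hv]
  ring

lemma Aop_shift_self {d : ℕ} (e : Fin d → ℝ) (k : ℕ) (m : ℤ) (g : (Fin d → ℝ) → ℂ)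
    (hper : ∀ x, g (x + (2 * π) • e) = g x) (x : Fin d → ℝ) (s : ℝ) :
    Aop e k m g (x + (((k : ℝ) + 1) * s) • e) =
      Complex.exp (-(Complex.I * m * s)) * Aop e k m g x := by
  unfold Aop
  set q : ℝ → ℂ := fun t => Complex.exp (Complex.I * m * t) * g (x + (((k : ℝ) + 1) * t) • e)
    with hq
  have hper' : ∀ n : ℕ, ∀ y, g (y + ((n : ℝ) * (2 * π)) • e) = g y := by
    intro n
    induction n with
    | zero => simp
    | succ n ih =>
      intro y
      have h : y + (((n + 1 : ℕ) : ℝ) * (2 * π)) • e =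
          (y + ((n : ℝ) * (2 * π)) • e) + (2 * π) • e := by
        rw [add_assoc, ← add_smul]
        congr 2
        push_cast
        ring
      rw [h, hper, ih]
  have hqp : Function.Periodic q (2 * π) := by
    intro t
    simp only [hq]
    congr 1
    · have : Complex.I * m * ((t + 2 * π : ℝ) : ℂ) = Complex.I * m * t + m * (2 * π * Complex.I) := by
        push_cast
        ring
      rw [this, Complex.exp_add, Complex.exp_int_mul_two_pi_mul_I, mul_one]
    · have h : x + (((k : ℝ) + 1) * (t + 2 * π)) • e =
          (x + (((k : ℝ) + 1) * t) • e) + (((k + 1 : ℕ) : ℝ) * (2 * π)) • e := by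
        rw [add_assoc, ← add_smul]
        congr 2
        push_cast
        ring
      rw [h, hper']
  have h1 : ∀ t : ℝ, Complex.exp (Complex.I * m * t) *
      g (x + (((k : ℝ) + 1) * s) • e + (((k : ℝ) + 1) * t) • e) =
      Complex.exp (-(Complex.I * m * s)) * q (t + s) := by
    intro t
    simp only [hq]
    rw [← mul_assoc, ← Complex.exp_add, add_assoc x, ← add_smul]
    congr 2
    · push_cast; ring
    · congr 2; ring
  simp_rw [h1]
  rw [intervalIntegral.integral_const_mul, intervalIntegral.integral_comp_add_right q s]
  congr 1
  have := hqp.intervalIntegral_add_eq (-π + s) (-π)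
  convert this using 2 <;> ring

lemma Aop_shift_self' {d : ℕ} (e : Fin d → ℝ) (k : ℕ) (m : ℤ) (g : (Fin d → ℝ) → ℂ)
    (hper : ∀ x, g (x + (2 * π) • e) = g x) (x : Fin d → ℝ) (s : ℝ) :
    Aop e k m g (x + s • e) =
      Complex.exp (-(Complex.I * m * s / ((k : ℂ) + 1))) * Aop e k m g x := by
  have hk : ((k : ℝ) + 1) ≠ 0 := by positivity
  have := Aop_shift_self e k m g hper x (s / ((k : ℝ) + 1))
  rw [mul_div_cancel₀ _ hk] at this
  rw [this]
  congr 3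
  push_cast
  ring

lemma Aop_dvd {d : ℕ} (e : Fin d → ℝ) (k : ℕ) (n : ℤ) (g : (Fin d → ℝ) → ℂ)
    (hper : ∀ x, g (x + (2 * π) • e) = g x) (x : Fin d → ℝ) (s : ℝ) :
    Aop e k (((k : ℤ) + 1) * n) g (x + s • e) =
      Complex.exp (Complex.I * ((-n : ℤ) : ℂ) * s) * Aop e k (((k : ℤ) + 1) * n) g x := by
  rw [Aop_shift_self' e k _ g hper]
  congr 2
  have hk : ((k : ℂ) + 1) ≠ 0 := by exact_mod_cast Nat.succ_ne_zero k
  push_cast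
  field_simp

lemma Aop_not_dvd {d : ℕ} (e : Fin d → ℝ) (k : ℕ) (m : ℤ) (g : (Fin d → ℝ) → ℂ)
    (hper : ∀ x, g (x + (2 * π) • e) = g x) (hm : ¬ ((k : ℤ) + 1) ∣ m) :
    Aop e k m g = 0 := by
  funext x
  have h1 := Aop_shift_self' e k m g hper x (2 * π)
  have h2 := Aop_shift e ((2 * π) • e) k m g 1 (by simpa using hper) x
  rw [one_mul] at h2
  rw [h2] at h1
  by_contra hne
  have h3 : Complex.exp (-(Complex.I * m * ((2 * π : ℝ) : ℂ) / ((k : ℂ) + 1))) = 1 := by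
    have : (Complex.exp (-(Complex.I * m * ((2 * π : ℝ) : ℂ) / ((k : ℂ) + 1))) - 1) *
      Aop e k m g x = 0 := by rw [sub_mul, ← h1]; ring
    rcases mul_eq_zero.mp this with h | h
    · exact sub_eq_zero.mp h
    · exact absurd h hne
  obtain ⟨n, hn⟩ := Complex.exp_eq_one_iff.mp h3
  apply hm
  refine ⟨-n, ?_⟩
  have hk : ((k : ℂ) + 1) ≠ 0 := by exact_mod_cast Nat.succ_ne_zero k
  have hpi : (2 * (π : ℂ) * Complex.I) ≠ 0 := Complex.two_pi_I_ne_zero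
  have h4 : (m : ℂ) = ((k : ℂ) + 1) * (-n) := by
    push_cast at hn
    have : (m : ℂ) * (2 * π * Complex.I) = (((k : ℂ) + 1) * (-n)) * (2 * π * Complex.I) := by
      have h5 : ((k : ℂ) + 1) * (-(Complex.I * m * (2 * π) / ((k : ℂ) + 1))) =
        ((k : ℂ) + 1) * (n * (2 * π * Complex.I)) := by rw [hn]
      have h6 : ((k : ℂ) + 1) * (-(Complex.I * m * (2 * π) / ((k : ℂ) + 1))) =
        -(Complex.I * m * (2 * π)) := by field_simp
      rw [h6] at h5
      linear_combination -h5
    exact mul_right_cancel₀ hpi this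
  exact_mod_cast h4

lemma Lop_eq_sum {d : ℕ} (e : Fin d → ℝ) (K : ℕ) (J : ℝ → ℝ) (D : ℤ) (a : ℤ → ℂ)
    (ha : ∀ t : ℝ, (J t : ℂ) = ∑ n ∈ Finset.Icc (-D) D, a n * Complex.exp (Complex.I * n * t))
    (g : (Fin d → ℝ) → ℂ) (hg : Continuous g) :
    Lop e K J g = ∑ n ∈ Finset.Icc (-D) D, ∑ k ∈ Finset.range (K + 1),
      (a n * ((-1) ^ k * ((K + 1).choose (k + 1) : ℂ))) • Aop e k n g := by
  funext x
  simp only [Finset.sum_apply, Pi.smul_apply, smul_eq_mul]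
  unfold Lop Aop
  simp_rw [ha, Finset.sum_mul_sum, ← intervalIntegral.integral_const_mul]
  rw [intervalIntegral.integral_finsetSum]
  · refine Finset.sum_congr rfl fun n _ => ?_
    rw [intervalIntegral.integral_finsetSum]
    · refine Finset.sum_congr rfl fun k _ => ?_
      congr 1
      funext t
      ring
    · intro k _
      exact Continuous.intervalIntegrable (by fun_prop) _ _
  · intro k _
    exact Continuous.intervalIntegrable (by fun_prop) _ _

lemma Lop_int {d : ℕ} (e : Fin d → ℝ) (K : ℕ) (J : ℝ → ℝ) (hJ : Continuous J)
    (g : (Fin d → ℝ) → ℂ) (hg : Continuous g) (x : Fin d → ℝ) :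
    IntervalIntegrable (fun t : ℝ => (J t : ℂ) * ∑ k ∈ Finset.range (K + 1),
      ((-1) ^ k * ((K + 1).choose (k + 1) : ℂ)) * g (x + (((k : ℝ) + 1) * t) • e))
      MeasureTheory.volume (-π) π :=
  Continuous.intervalIntegrable (by fun_prop) _ _

lemma Lop_add {d : ℕ} (e : Fin d → ℝ) (K : ℕ) (J : ℝ → ℝ) (hJ : Continuous J)
    (g h : (Fin d → ℝ) → ℂ) (hg : Continuous g) (hh : Continuous h) :
    Lop e K J (g + h) = Lop e K J g + Lop e K J h := by
  funext x
  simp only [Pi.add_apply]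
  unfold Lop
  rw [← intervalIntegral.integral_add (Lop_int e K J hJ g hg x) (Lop_int e K J hJ h hh x)]
  congr 1
  funext t
  rw [← mul_add, ← Finset.sum_add_distrib]
  congr 1
  refine Finset.sum_congr rfl fun k _ => ?_
  simp only [Pi.add_apply]
  ring

lemma Lop_smul {d : ℕ} (e : Fin d → ℝ) (K : ℕ) (J : ℝ → ℝ) (c : ℂ)
    (g : (Fin d → ℝ) → ℂ) :
    Lop e K J (c • g) = c • Lop e K J g := by
  funext x
  simp only [Pi.smul_apply, smul_eq_mul]
  unfold Lop
  rw [← intervalIntegral.integral_const_mul]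
  congr 1
  funext t
  simp only [Pi.smul_apply, smul_eq_mul]
  rw [mul_left_comm, Finset.mul_sum (a := c)]
  congr 1
  refine Finset.sum_congr rfl fun k _ => ?_
  ring

lemma Lop_bound {d : ℕ} (e : Fin d → ℝ) (K : ℕ) (J : ℝ → ℝ) (hJ : Continuous J)
    (hJ0 : ∀ t, 0 ≤ J t) (hJ1 : ∫ t in (-π)..π, J t = 1)
    (g : (Fin d → ℝ) → ℂ) (B : ℝ) (hB : ∀ x, ‖g x‖ ≤ B) (x : Fin d → ℝ) :
    ‖Lop e K J g x‖ ≤ 2 ^ (K + 1) * B := by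
  have hB0 : 0 ≤ B := (norm_nonneg _).trans (hB x)
  have hpi : -π ≤ π := by linarith [Real.pi_pos]
  have hs : ∑ k ∈ Finset.range (K + 1), (((K + 1).choose (k + 1) : ℕ) : ℝ) ≤ 2 ^ (K + 1) := by
    have := Nat.sum_range_choose (K + 1)
    rw [Finset.sum_range_succ'] at this
    have h2 : ∑ k ∈ Finset.range (K + 1), (K + 1).choose (k + 1) ≤ 2 ^ (K + 1) := by omega
    exact_mod_cast h2
  unfold Lop
  calc _ ≤ ∫ t in (-π)..π, J t * (2 ^ (K + 1) * B) := by
        refine intervalIntegral.norm_integral_le_of_norm_le hpi ?_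
          (Continuous.intervalIntegrable (by fun_prop) _ _)
        refine Filter.Eventually.of_forall fun t _ => ?_
        rw [norm_mul, Complex.norm_real, Real.norm_of_nonneg (hJ0 t)]
        refine mul_le_mul_of_nonneg_left ?_ (hJ0 t)
        refine (norm_sum_le _ _).trans ?_
        calc _ ≤ ∑ k ∈ Finset.range (K + 1), (((K + 1).choose (k + 1) : ℕ) : ℝ) * B := by
              refine Finset.sum_le_sum fun k _ => ?_
              rw [norm_mul, norm_mul, norm_pow, norm_neg, norm_one, one_pow, one_mul,
                Complex.norm_natCast]
              gcongr
              exact hB _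
          _ ≤ _ := by
              rw [← Finset.sum_mul]
              gcongr
    _ = _ := by rw [intervalIntegral.integral_mul_const, hJ1, one_mul]

lemma fwdDiff_bound (t : ℝ) (M : ℝ) (K : ℕ) : ∀ (φ : ℕ → ℝ → ℂ),
    (∀ k < K, ∀ s, HasDerivAt (φ k) (φ (k + 1) s) s) →
    (∀ s, ‖φ K (s + t) - φ K s‖ ≤ M) → ∀ s, ‖(fwdDiff t)^[K + 1] (φ 0) s‖ ≤ |t| ^ K * M := by
  induction K with
  | zero =>
    intro φ _ h s
    simpa [fwdDiff] using h s
  | succ K ih =>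
    intro φ hd h s
    have hder : ∀ n : ℕ, ∀ s, HasDerivAt ((fwdDiff t)^[n] (φ 0)) ((fwdDiff t)^[n] (φ 1) s) s := by
      intro n
      induction n with
      | zero => exact fun s => hd 0 (Nat.succ_pos _) s
      | succ n ihn =>
        intro s
        simp only [Function.iterate_succ_apply']
        exact ((ihn (s + t)).comp_add_const s t).sub (ihn s)
    have hb := ih (fun k => φ (k + 1)) (fun k hk => hd (k + 1) (by omega)) h
    rw [Function.iterate_succ_apply']
    have := Convex.norm_image_sub_le_of_norm_hasDerivWithin_le (s := Set.univ)
      (fun x _ => (hder (K + 1) x).hasDerivWithinAt) (fun x _ => hb x) convex_univ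
      (Set.mem_univ s) (Set.mem_univ (s + t))
    rw [add_sub_cancel_left, Real.norm_eq_abs] at this
    unfold fwdDiff at this ⊢
    refine this.trans (le_of_eq ?_)
    ring

lemma Lop_error {d : ℕ} (e : Fin d → ℝ) (K : ℕ) (J : ℝ → ℝ) (hJ : Continuous J)
    (hJ0 : ∀ t, 0 ≤ J t) (hJ1 : ∫ t in (-π)..π, J t = 1) (g : ℕ → (Fin d → ℝ) → ℂ)
    (hg : Continuous (g 0))
    (hd : ∀ k < K, ∀ x, HasDerivAt (fun s : ℝ => g k (x + s • e)) (g (k + 1) x) 0)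
    (w : ℝ) (N : ℕ)
    (hM : ∀ x t, ‖g K (x + t • e) - g K x‖ ≤ (1 + N * |t|) * w) (x : Fin d → ℝ) :
    ‖g 0 x - Lop e K J (g 0) x‖ ≤ (∫ t in (-π)..π, J t * (|t| ^ K * (1 + N * |t|))) * w := by
  have hpi : -π ≤ π := by linarith [Real.pi_pos]
  have h1 : g 0 x = ∫ t in (-π)..π, (J t : ℂ) * g 0 x := by
    rw [intervalIntegral.integral_mul_const, intervalIntegral.integral_ofReal, hJ1]
    simp
  have h2 : g 0 x - Lop e K J (g 0) x = ∫ t in (-π)..π, (J t : ℂ) *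
      ((-1) ^ (K + 1) * (fwdDiff t)^[K + 1] (fun s : ℝ => g 0 (x + s • e)) 0) := by
    conv_lhs => rw [h1]
    unfold Lop
    rw [← intervalIntegral.integral_sub (Continuous.intervalIntegrable (by fun_prop) _ _)
      (Lop_int e K J hJ _ hg x)]
    congr 1
    funext t
    rw [← mul_sub]
    congr 1
    rw [fwdDiff_iter_eq_sum_shift, Finset.sum_range_succ' _ (K + 1)]
    simp only [zsmul_eq_mul, nsmul_eq_mul, zero_add]
    rw [mul_add, Finset.mul_sum, add_comm (Finset.sum _ _), sub_eq_add_neg, ← Finset.sum_neg_distrib]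
    congr 1
    · push_cast
      simp only [Nat.choose_zero_right, Nat.cast_one, zero_mul, zero_smul, add_zero,
        mul_one]
      rw [← mul_assoc, ← mul_pow]
      simp
    · refine Finset.sum_congr rfl fun k hk => ?_
      have hk' : k ≤ K := by
        have := Finset.mem_range.mp hk
        omega
      push_cast
      have hs : ((-1 : ℂ)) ^ (K + 1) * (-1) ^ (K - k) = -(-1) ^ k := by
        obtain ⟨l, rfl⟩ := Nat.exists_eq_add_of_le hk'
        have : k + l - k = l := by omega
        rw [this, ← pow_add]
        have : k + l + 1 + l = k + 1 + 2 * l := by ring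
        rw [this, pow_add, pow_mul]
        simp [pow_succ]
      rw [← mul_assoc, ← mul_assoc, hs]
      ring
  rw [h2, ← intervalIntegral.integral_mul_const]
  refine intervalIntegral.norm_integral_le_of_norm_le hpi ?_
    (Continuous.intervalIntegrable (by fun_prop) _ _)
  refine Filter.Eventually.of_forall fun t _ => ?_
  rw [norm_mul, Complex.norm_real, Real.norm_of_nonneg (hJ0 t), mul_assoc]
  refine mul_le_mul_of_nonneg_left ?_ (hJ0 t)
  rw [norm_mul, norm_pow, norm_neg, norm_one, one_pow, one_mul, mul_assoc]
  refine fwdDiff_bound t ((1 + N * |t|) * w) K (fun k s => g k (x + s • e)) ?_ ?_ 0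
  · intro k hk s
    have := hd k hk (x + s • e)
    have h3 := HasDerivAt.comp_sub_const (f := fun u : ℝ => g k (x + s • e + u • e)) s s
      (by simpa using this)
    have h4 : (fun u : ℝ => g k (x + s • e + (u - s) • e)) = fun u : ℝ => g k (x + u • e) := by
      funext u
      rw [add_assoc, ← add_smul]
      simp
    rw [h4] at h3
    exact h3
  · intro s
    have := hM (x + s • e) t
    rw [add_assoc, ← add_smul] at this
    exact this

end JacksonAux
namespace JacksonAux

/-- Standard basis vector. -/
noncomputable abbrev bas {d : ℕ} (j : Fin d) : Fin d → ℝ := Pi.single j (1 : ℝ)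

lemma upd {d : ℕ} (j : Fin d) (x : Fin d → ℝ) (s : ℝ) :
    Function.update x j (x j + s) = x + s • bas j := by
  funext i
  by_cases h : i = j
  · subst h; simp
  · simp [h]

lemma partial_eq {d : ℕ} (j : Fin d) (g : (Fin d → ℝ) → ℝ) (x : Fin d → ℝ) :
    partialDerivVar j g x = deriv (fun s : ℝ => g (x + s • bas j)) 0 := by
  unfold partialDerivVar
  have := deriv_comp_const_add (f := fun s => g (Function.update x j s)) (x j) 0
  rw [add_zero] at this
  rw [← this]
  simp_rw [upd]

lemma partial_per {d : ℕ} (j : Fin d) (v : Fin d → ℝ) (g : (Fin d → ℝ) → ℝ)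
    (hg : ∀ x, g (x + v) = g x) (x : Fin d → ℝ) :
    partialDerivVar j g (x + v) = partialDerivVar j g x := by
  rw [partial_eq, partial_eq]
  congr 1
  funext s
  rw [add_right_comm, hg]

lemma partial_iter_per {d : ℕ} (j : Fin d) (v : Fin d → ℝ) (g : (Fin d → ℝ) → ℝ)
    (hg : ∀ x, g (x + v) = g x) (k : ℕ) (x : Fin d → ℝ) :
    (partialDerivVar j)^[k] g (x + v) = (partialDerivVar j)^[k] g x := by
  induction k generalizing x with
  | zero => exact hg x
  | succ k ih =>
    simp only [Function.iterate_succ_apply']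
    exact partial_per j v _ ih x

lemma partial_hasDeriv {d : ℕ} (j : Fin d) (g : (Fin d → ℝ) → ℝ) (x : Fin d → ℝ)
    (h : DifferentiableAt ℝ (fun s => g (Function.update x j s)) (x j)) :
    HasDerivAt (fun s : ℝ => ((g (x + s • bas j) : ℝ) : ℂ)) (partialDerivVar j g x : ℂ) 0 := by
  have h1 := h.hasDerivAt
  have h2 := HasDerivAt.comp_const_add (f := fun s => g (Function.update x j s)) (x j) 0
    (by rw [add_zero]; exact h1)
  simp only [upd] at h2
  exact h2.ofReal_comp

lemma bounded_of_per {d : ℕ} (g : (Fin d → ℝ) → ℝ) (hc : Continuous g)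
    (hp : ∀ (i : Fin d) (x : Fin d → ℝ), g (x + (2 * π) • bas i) = g x) :
    ∃ B, ∀ x, |g x| ≤ B := by
  let P : AddSubgroup (Fin d → ℝ) :=
    { carrier := {v | ∀ x, g (x + v) = g x}
      zero_mem' := by simp
      add_mem' := by
        intro a b ha hb x
        rw [← add_assoc, hb, ha]
      neg_mem' := by
        intro a ha x
        have := ha (x + -a)
        rw [← this]
        simp }
  obtain ⟨B, hB⟩ := (isCompact_Icc (a := (0 : Fin d → ℝ)) (b := fun _ => 2 * π)).exists_bound_of_continuousOn
    hc.continuousOn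
  refine ⟨B, fun x => ?_⟩
  have hpi : (0 : ℝ) < 2 * π := by positivity
  have hv : ∑ i, (-⌊x i / (2 * π)⌋) • ((2 * π) • bas i) ∈ P :=
    AddSubgroup.sum_mem _ fun i _ => AddSubgroup.zsmul_mem P (show (2 * π) • bas i ∈ P from hp i) _
  rw [← hv x]
  apply hB
  have hco : ∀ i, (x + ∑ i, (-⌊x i / (2 * π)⌋) • ((2 * π) • bas i)) i =
      x i - ⌊x i / (2 * π)⌋ * (2 * π) := by
    intro i
    simp [Finset.sum_apply, Pi.single_apply]
    ring
  constructor
  · intro i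
    rw [hco]
    have := Int.floor_le (x i / (2 * π))
    rw [le_div_iff₀ hpi] at this
    simpa using this
  · intro i
    rw [hco]
    have := Int.lt_floor_add_one (x i / (2 * π))
    rw [div_lt_iff₀ hpi] at this
    simp only
    linarith

lemma modulus_ge {d : ℕ} (g : (Fin d → ℝ) → ℝ) (B : ℝ) (hB : ∀ x, |g x| ≤ B) (δ : ℝ)
    (x t : Fin d → ℝ) (ht : ‖t‖ < δ) : |g (x + t) - g x| ≤ modulusOfContinuityMulti g δ := by
  refine le_csSup ⟨B + B, ?_⟩ ⟨x, t, ht, rfl⟩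
  rintro _ ⟨x, t, _, rfl⟩
  exact (abs_sub _ _).trans (add_le_add (hB _) (hB _))

lemma modulus_nonneg {d : ℕ} (g : (Fin d → ℝ) → ℝ) (δ : ℝ) :
    0 ≤ modulusOfContinuityMulti g δ := by
  refine Real.sSup_nonneg ?_
  rintro _ ⟨x, t, _, rfl⟩
  exact abs_nonneg _

lemma modulus_dir {d : ℕ} (g : (Fin d → ℝ) → ℝ) (B : ℝ) (hB : ∀ x, |g x| ≤ B) (j : Fin d)
    (N : ℕ) (hN : 1 ≤ N) (x : Fin d → ℝ) (t : ℝ) :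
    |g (x + t • bas j) - g x| ≤ (1 + N * |t|) * modulusOfContinuityMulti g (1 / N) := by
  set w := modulusOfContinuityMulti g (1 / N) with hw
  have hw0 : 0 ≤ w := modulus_nonneg _ _
  have hN0 : (0 : ℝ) < N := by exact_mod_cast hN
  set n := ⌊N * |t|⌋₊ + 1 with hn
  have hn0 : (0 : ℝ) < n := by rw [hn]; positivity
  have hlt : N * |t| < n := by
    rw [hn]; push_cast; exact Nat.lt_floor_add_one _
  have hle : (n : ℝ) ≤ 1 + N * |t| := by
    rw [hn]; push_cast
    have := Nat.floor_le (show 0 ≤ N * |t| by positivity)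
    linarith
  have hs : ‖(t / n) • bas j‖ < 1 / N := by
    rw [norm_smul, Pi.norm_single, norm_one, mul_one, Real.norm_eq_abs, abs_div, Nat.abs_cast,
      div_lt_div_iff₀ hn0 hN0]
    linarith
  have hk : ∀ k : ℕ, |g (x + ((k : ℝ) * (t / n)) • bas j) - g x| ≤ k * w := by
    intro k
    induction k with
    | zero => simp
    | succ k ih =>
      have h1 := modulus_ge g B hB _ (x + ((k : ℝ) * (t / n)) • bas j) _ hs
      have e : x + (((k + 1 : ℕ) : ℝ) * (t / n)) • bas j =
          x + ((k : ℝ) * (t / n)) • bas j + (t / n) • bas j := by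
        rw [add_assoc, ← add_smul]
        congr 2
        push_cast
        ring
      rw [e]
      have := abs_sub_le (g (x + ((k : ℝ) * (t / n)) • bas j + (t / n) • bas j))
        (g (x + ((k : ℝ) * (t / n)) • bas j)) (g x)
      push_cast
      linarith
  have h := hk n
  rw [mul_div_cancel₀ _ hn0.ne'] at h
  exact h.trans (by gcongr)

/-- Continuous coordinatewise periodic functions that are pure modes in the variables of `S`. -/
def modes {d : ℕ} (D : Fin d → ℤ) (S : Finset (Fin d)) : Set ((Fin d → ℝ) → ℂ) :=
  {h | Continuous h ∧ (∀ (i : Fin d) (x : Fin d → ℝ), h (x + (2 * π) • bas i) = h x) ∧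
    ∃ n : Fin d → ℤ, ∀ j ∈ S, (-D j ≤ n j ∧ n j ≤ D j) ∧ ∀ (x : Fin d → ℝ) (s : ℝ),
      h (x + s • bas j) = Complex.exp (Complex.I * n j * s) * h x}

lemma span_cont {d : ℕ} (D : Fin d → ℤ) (S : Finset (Fin d)) (h : (Fin d → ℝ) → ℂ)
    (hh : h ∈ Submodule.span ℂ (modes D S)) : Continuous h := by
  induction hh using Submodule.span_induction with
  | mem x hx => exact hx.1
  | zero => exact continuous_const
  | add x y _ _ hx hy => exact hx.add hy
  | smul a x _ hx => exact hx.const_smul a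

lemma Lop_span {d : ℕ} (D : Fin d → ℤ) (S : Finset (Fin d)) (j : Fin d) (hj : j ∉ S)
    (K : ℕ) (J : ℝ → ℝ) (hJ : Continuous J) (a : ℤ → ℂ)
    (ha : ∀ t : ℝ, (J t : ℂ) =
      ∑ n ∈ Finset.Icc (-D j) (D j), a n * Complex.exp (Complex.I * n * t))
    (h : (Fin d → ℝ) → ℂ) (hh : h ∈ Submodule.span ℂ (modes D S)) :
    Lop (bas j) K J h ∈ Submodule.span ℂ (modes D (insert j S)) := by
  induction hh using Submodule.span_induction with
  | mem g hg =>
    obtain ⟨hc, hp, n, hn⟩ := hg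
    rw [Lop_eq_sum (bas j) K J (D j) a ha g hc]
    refine Submodule.sum_mem _ fun m hm => Submodule.sum_mem _ fun k _ =>
      Submodule.smul_mem _ _ ?_
    by_cases hdv : ((k : ℤ) + 1) ∣ m
    · obtain ⟨q, rfl⟩ := hdv
      refine Submodule.subset_span ⟨Aop_cont _ _ _ _ hc, ?_, Function.update n j (-q), ?_⟩
      · intro i x
        have := Aop_shift (bas j) ((2 * π) • bas i) k (((k : ℤ) + 1) * q) g 1
          (by simpa using hp i) x
        rw [this, one_mul]
      · intro i hi
        by_cases hij : i = j
        · subst hij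
          rw [Function.update_self]
          refine ⟨?_, fun x s => Aop_dvd _ _ _ _ (hp i) x s⟩
          rw [Finset.mem_Icc] at hm
          have h1 : |q| ≤ |((k : ℤ) + 1) * q| := by
            rw [abs_mul]
            refine le_mul_of_one_le_left (abs_nonneg _) ?_
            rw [abs_of_nonneg (by positivity)]
            omega
          have h2 : |((k : ℤ) + 1) * q| ≤ D i := abs_le.mpr hm
          have h3 := abs_le.mp (h1.trans h2)
          constructor <;> linarith
        · have hiS : i ∈ S := by
            rcases Finset.mem_insert.mp hi with h | h
            · exact absurd h hij
            · exact h
          rw [Function.update_of_ne hij]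
          refine ⟨(hn i hiS).1, fun x s => ?_⟩
          exact Aop_shift _ _ _ _ _ _ (fun y => (hn i hiS).2 y s) x
    · rw [Aop_not_dvd _ _ _ _ (hp j) hdv]
      exact Submodule.zero_mem _
  | zero =>
    have : Lop (bas j) K J (0 : (Fin d → ℝ) → ℂ) = 0 := by
      funext x
      simp [Lop]
    rw [this]
    exact Submodule.zero_mem _
  | add x y hx' hy' hx hy =>
    rw [Lop_add _ _ _ hJ _ _ (span_cont D S x hx') (span_cont D S y hy')]
    exact Submodule.add_mem _ hx hy
  | smul c x _ hx =>
    rw [Lop_smul]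
    exact Submodule.smul_mem _ _ hx

lemma mode_univ {d : ℕ} (h : (Fin d → ℝ) → ℂ) (n : Fin d → ℤ)
    (hn : ∀ (j : Fin d) (x : Fin d → ℝ) (s : ℝ),
      h (x + s • bas j) = Complex.exp (Complex.I * n j * s) * h x) (x : Fin d → ℝ) :
    h x = h 0 * Complex.exp (Complex.I * ∑ j, (n j : ℂ) * (x j : ℂ)) := by
  have key : ∀ S : Finset (Fin d), h (∑ j ∈ S, x j • bas j) =
      h 0 * Complex.exp (Complex.I * ∑ j ∈ S, (n j : ℂ) * (x j : ℂ)) := by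
    intro S
    induction S using Finset.induction_on with
    | empty => simp
    | insert j S hj ih =>
      rw [Finset.sum_insert hj, Finset.sum_insert hj, add_comm, hn, ih, mul_add, Complex.exp_add,
        mul_assoc Complex.I]
      ring
  have e : x = ∑ j, x j • bas j := by
    funext i
    simp [Finset.sum_apply, Pi.single_apply]
  conv_lhs => rw [e]
  exact key Finset.univ

lemma span_univ {d : ℕ} (D : Fin d → ℤ) (h : (Fin d → ℝ) → ℂ)
    (hh : h ∈ Submodule.span ℂ (modes D Finset.univ)) :
    ∃ c : (Fin d → ℤ) → ℂ, ∀ x, h x = ∑ n ∈ Finset.Icc (fun j => -D j) D,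
      c n * Complex.exp (Complex.I * ∑ j, (n j : ℂ) * (x j : ℂ)) := by
  have : Submodule.span ℂ (modes D Finset.univ) ≤ Submodule.span ℂ
      ((fun (n : Fin d → ℤ) (x : Fin d → ℝ) =>
        Complex.exp (Complex.I * ∑ j, (n j : ℂ) * (x j : ℂ))) ''
        (↑(Finset.Icc (fun j => -D j) D) : Set (Fin d → ℤ))) := by
    rw [Submodule.span_le]
    rintro g ⟨_, _, n, hn⟩
    have e : g = g 0 • (fun (x : Fin d → ℝ) =>
        Complex.exp (Complex.I * ∑ j, (n j : ℂ) * (x j : ℂ))) := by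
      funext x
      exact mode_univ g n (fun j => (hn j (Finset.mem_univ j)).2) x
    rw [e]
    refine Submodule.smul_mem _ _ (Submodule.subset_span ⟨n, ?_, rfl⟩)
    rw [Finset.coe_Icc]
    exact ⟨fun j => (hn j (Finset.mem_univ j)).1.1, fun j => (hn j (Finset.mem_univ j)).1.2⟩
  have h2 := this hh
  rw [Submodule.mem_span_image_finset_iff_exists_fun'] at h2
  obtain ⟨c, hc⟩ := h2
  refine ⟨c, fun x => ?_⟩
  rw [← hc]
  simp [Finset.sum_apply]

lemma symmetrize {d : ℕ} (D : Fin d → ℤ) (c : (Fin d → ℤ) → ℂ) :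
    ∃ c' : (Fin d → ℤ) → ℂ, ∀ x : Fin d → ℝ,
      ∑ n ∈ Finset.Icc (fun j => -D j) D,
        c' n * Complex.exp (Complex.I * ∑ j, (n j : ℂ) * (x j : ℂ)) =
      (((∑ n ∈ Finset.Icc (fun j => -D j) D,
        c n * Complex.exp (Complex.I * ∑ j, (n j : ℂ) * (x j : ℂ))).re : ℝ) : ℂ) := by
  refine ⟨fun n => (c n + (starRingEnd ℂ) (c (-n))) / 2, fun x => ?_⟩
  rw [Complex.re_eq_add_conj, map_sum]
  have : ∑ n ∈ Finset.Icc (fun j => -D j) D, (starRingEnd ℂ)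
        (c n * Complex.exp (Complex.I * ∑ j, (n j : ℂ) * (x j : ℂ))) =
      ∑ n ∈ Finset.Icc (fun j => -D j) D, (starRingEnd ℂ) (c (-n)) *
        Complex.exp (Complex.I * ∑ j, (n j : ℂ) * (x j : ℂ)) := by
    refine Finset.sum_equiv (Equiv.neg _) ?_ ?_
    · intro n
      simp only [Finset.mem_Icc, Equiv.neg_apply, Pi.le_def, Pi.neg_apply]
      constructor
      · rintro ⟨h1, h2⟩
        exact ⟨fun i => by linarith [h2 i], fun i => by linarith [h1 i]⟩
      · rintro ⟨h1, h2⟩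
        exact ⟨fun i => by linarith [h2 i], fun i => by linarith [h1 i]⟩
    · intro n _
      rw [map_mul, ← Complex.exp_conj]
      simp [map_sum]
  rw [this, ← Finset.sum_add_distrib, Finset.sum_div]
  refine Finset.sum_congr rfl fun n _ => ?_
  ring

lemma arith_aux (A B R q : ℝ) (hA : 0 ≤ A) (hB : 0 ≤ B) (hR : 0 ≤ R) (hq : 0 ≤ q) :
    A * q + B * R ≤ (A + B) * (q + R) := by
  nlinarith [mul_nonneg hA hR, mul_nonneg hB hq]

set_option maxHeartbeats 1000000 in
lemma main_ind {d : ℕ} (K : Fin d → ℕ) (S : Finset (Fin d)) :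
    ∃ C : ℝ, 0 < C ∧
      ∀ f : (Fin d → ℝ) → ℝ, Continuous f →
        (∀ (j : Fin d) (x : Fin d → ℝ), f (x + (2 * π) • bas j) = f x) →
        (∀ (j : Fin d) (k : ℕ), k < K j → ∀ x : Fin d → ℝ,
          DifferentiableAt ℝ
            (fun s => ((partialDerivVar j)^[k] f) (Function.update x j s)) (x j)) →
        (∀ j : Fin d, Continuous ((partialDerivVar j)^[K j] f)) →
        ∀ N : Fin d → ℕ, (∀ j, 1 ≤ N j) →
          ∃ T ∈ Submodule.span ℂ (modes
              (fun j => (((K j + 3 + 1) / 2) * (N j / 2) : ℤ)) S),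
            ∀ x : Fin d → ℝ, ‖(f x : ℂ) - T x‖ ≤
              C * ∑ j ∈ S, modulusOfContinuityMulti ((partialDerivVar j)^[K j] f) (1 / N j)
                    / (N j : ℝ) ^ (K j) := by
  induction S using Finset.induction_on with
  | empty =>
    refine ⟨1, one_pos, fun f hf hp _ _ N _ => ⟨fun x => (f x : ℂ), ?_, by simp⟩⟩
    refine Submodule.subset_span ⟨by fun_prop, fun i x => by simp only [hp], 0, by simp⟩
  | insert j S hj ih =>
    obtain ⟨C, hC, ih⟩ := ih
    obtain ⟨C', hC', hk⟩ := kernel_exists (K j)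
    refine ⟨C' + 2 ^ (K j + 1) * C, by positivity, fun f hf hp hd hcd N hN => ?_⟩
    obtain ⟨T, hT, hTb⟩ := ih f hf hp hd hcd N hN
    obtain ⟨J, hJ, hJ0, hJ1, hJm, a, ha⟩ := hk (N j) (hN j)
    refine ⟨Lop (bas j) (K j) J T, Lop_span
      (fun j => (((K j + 3 + 1) / 2) * (N j / 2) : ℤ)) S j hj (K j) J hJ a ha T hT, fun x => ?_⟩
    have hTc := span_cont _ _ _ hT
    set F : (Fin d → ℝ) → ℂ := fun x => (f x : ℂ) with hF
    have hFc : Continuous F := by fun_prop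
    obtain ⟨B, hB⟩ := bounded_of_per _ (hcd j)
      (fun i => partial_iter_per j ((2 * π) • bas i) f (hp i) (K j))
    set w := modulusOfContinuityMulti ((partialDerivVar j)^[K j] f) (1 / N j) with hw
    have hw0 : 0 ≤ w := modulus_nonneg _ _
    set R := ∑ j ∈ S, modulusOfContinuityMulti ((partialDerivVar j)^[K j] f) (1 / N j)
                    / (N j : ℝ) ^ (K j) with hR
    have hR0 : 0 ≤ R := Finset.sum_nonneg fun i _ =>
      div_nonneg (modulus_nonneg _ _) (by positivity)
    have h1 : ‖F x - Lop (bas j) (K j) J F x‖ ≤ C' * (w / (N j : ℝ) ^ (K j)) := by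
      have := Lop_error (bas j) (K j) J hJ hJ0 hJ1
        (fun k y => (((partialDerivVar j)^[k] f y : ℝ) : ℂ)) hFc ?_ w (N j) ?_ x
      · refine this.trans ?_
        calc _ ≤ C' / (N j : ℝ) ^ (K j) * w := by gcongr
          _ = _ := by ring
      · intro k hk y
        have := partial_hasDeriv j _ y (hd j k hk y)
        simp only [Function.iterate_succ_apply']
        exact this
      · intro y t
        rw [← Complex.ofReal_sub, Complex.norm_real, Real.norm_eq_abs]
        exact modulus_dir _ B hB j (N j) (hN j) y t
    have h2 : ‖Lop (bas j) (K j) J (F - T) x‖ ≤ (2 ^ (K j + 1) * C) * R := by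
      rw [mul_assoc]
      exact Lop_bound _ _ _ hJ hJ0 hJ1 _ _ (fun y => hTb y) x
    have h3 : Lop (bas j) (K j) J F = Lop (bas j) (K j) J (F - T) + Lop (bas j) (K j) J T := by
      rw [← Lop_add _ _ _ hJ _ _ (hFc.sub hTc) hTc, sub_add_cancel]
    have h4 : F x - Lop (bas j) (K j) J T x =
        (F x - Lop (bas j) (K j) J F x) + Lop (bas j) (K j) J (F - T) x := by
      rw [h3, Pi.add_apply]; ring
    rw [Finset.sum_insert hj, ← hw, ← hR]
    change ‖F x - _‖ ≤ _
    rw [h4]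
    refine (norm_add_le _ _).trans ((add_le_add h1 h2).trans ?_)
    have hq : 0 ≤ w / (N j : ℝ) ^ (K j) := div_nonneg hw0 (by positivity)
    exact arith_aux _ _ _ _ hC'.le (mul_nonneg (by positivity) hC.le) hR0 hq

end JacksonAux

/-- The multivariate Jackson inequality: for each `K ∈ ℕ₀^d` there is `C_K > 0`
(independent of `f`) such that every continuous, coordinatewise `2π`-periodic
`f : ℝ^d → ℝ` with continuous partial derivatives `∂_j^{K_j} f` can, for each
`N ∈ ℕ^d`, be approximated by a real multivariate trigonometric polynomial of
coordinatewise degree at most `⌈(K_j+3)/2⌉⌊N_j/2⌋` with uniform error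
`≤ C_K ∑_j ω_{∂_j^{K_j} f}(1/N_j)/N_j^{K_j}`. -/
theorem jackson_inequality_multivariate (d : ℕ) (hd : 1 ≤ d) (K : Fin d → ℕ) :
    ∃ C : ℝ, 0 < C ∧
      ∀ f : (Fin d → ℝ) → ℝ, Continuous f →
        (∀ (j : Fin d) (x : Fin d → ℝ), f (Function.update x j (x j + 2 * π)) = f x) →
        (∀ (j : Fin d) (k : ℕ), k < K j → ∀ x : Fin d → ℝ,
          DifferentiableAt ℝ
            (fun s => ((partialDerivVar j)^[k] f) (Function.update x j s)) (x j)) →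
        (∀ j : Fin d, Continuous ((partialDerivVar j)^[K j] f)) →
        ∀ N : Fin d → ℕ, (∀ j, 1 ≤ N j) →
          ∃ c : (Fin d → ℤ) → ℂ,
            (∀ x : Fin d → ℝ,
              (∑ n ∈ Finset.Icc (fun j => -(((K j + 3 + 1) / 2) * (N j / 2) : ℤ))
                  (fun j => (((K j + 3 + 1) / 2) * (N j / 2) : ℤ)),
                c n * Complex.exp (Complex.I * ∑ j, (n j : ℂ) * (x j : ℂ))).im = 0) ∧
            ∀ x : Fin d → ℝ,
              |f x - (∑ n ∈ Finset.Icc (fun j => -(((K j + 3 + 1) / 2) * (N j / 2) : ℤ))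
                  (fun j => (((K j + 3 + 1) / 2) * (N j / 2) : ℤ)),
                c n * Complex.exp (Complex.I * ∑ j, (n j : ℂ) * (x j : ℂ))).re|
                ≤ C * ∑ j, modulusOfContinuityMulti ((partialDerivVar j)^[K j] f) (1 / N j)
                    / (N j : ℝ) ^ (K j) := by
  obtain ⟨C, hC, h⟩ := JacksonAux.main_ind K Finset.univ
  refine ⟨C, hC, fun f hf hp hd hcd N hN => ?_⟩
  obtain ⟨T, hT, hTb⟩ := h f hf (fun j x => by rw [← JacksonAux.upd]; exact hp j x) hd hcd N hN
  obtain ⟨c, hc⟩ := JacksonAux.span_univ _ T hT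
  obtain ⟨c', hc'⟩ := JacksonAux.symmetrize
    (fun j => (((K j + 3 + 1) / 2) * (N j / 2) : ℤ)) c
  refine ⟨c', fun x => ?_, fun x => ?_⟩
  · rw [hc' x, Complex.ofReal_im]
  · rw [hc' x, Complex.ofReal_re, ← hc x]
    refine le_trans ?_ (hTb x)
    have := Complex.abs_re_le_norm ((f x : ℂ) - T x)
    rwa [Complex.sub_re, Complex.ofReal_re] at this
end
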